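/- arXiv:1904.00437 — 2 statements merged into one kernel-verified Lean document; each statement's English description precedes it below -/
import Mathlib

section
/- Let σ, σ', s, s₀ ∈ ℝ satisfy σ < 1, σ' < 1, σ + σ' > 0, s₀ > 1/2, s ≤ s₀ and s + s₀ ≥ 0. Then there exists a constant C = C(σ, σ', s, s₀) such that for all Schwartz functions a, b on ℝ³: ‖ab‖_{H^{σ+σ'−1, s}} ≤ C ‖a‖_{H^{σ,s}} ‖b‖_{H^{σ',s₀}}. -/
/-!
On the Fourier side the product is the convolution `â * b̂`. Absorbing the weights into the
functions (`weight_split`), the estimate becomes the boundedness on `L²` of the trilinear form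
`∫∫ H(r) F(r - q) G(q) √KK(r, q) dq dr`. The squared kernel `KK` factors as
`⟨p_h⟩^{-2σ} ⟨q_h⟩^{-2σ'} ⟨r_h⟩^{-2(1-σ-σ')}` times `⟨r₃⟩^{2s} ⟨p₃⟩^{-2s} ⟨q₃⟩^{-2s₀}`, with
`p = r - q`.

The three horizontal exponents add up to the critical value and each is less than `1` when written
as `σ`, `σ'`, `1 - σ - σ'`, so the three frequencies play symmetric roles. The two largest of them
are comparable, whence (`crit_aux₂`) the horizontal factor is at most a constant times
`m^{-e} M^{-(1-e)}` on `m ≤ M`, where `m` is the smallest squared bracket, `M` is either of the other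
two, and `e = max(0, σ, σ', 1-σ-σ') < 1`. With `M` fixed, the integral of this over the plane of
the smallest frequency is bounded independently of `M`: it is dominated by a product of
one-dimensional functions of the same kind (`le_NN`, `lintegral_psi_le`). The vertical factor is at
most a constant times `⟨·⟩^{-2s₀}` of one of the three frequencies (`vert_aux`; this is where
`s ≤ s₀` and `s + s₀ ≥ 0` enter), which is integrable on the line because `s₀ > 1/2`.

The horizontal bound singles out one frequency and the vertical bound one frequency, so some
frequency is not singled out at all. Holding it fixed, `KK` is integrable in the remaining variable
uniformly (`KK_le`, `lintegral_QQ_le`), and the Cauchy–Schwarz inequality, with `√KK` grouped with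
the function of the fixed frequency, bounds the form (`trilinear`). Taking for `H` the weighted
modulus of the Fourier transform of `ab` and dividing by `‖H‖` gives the product law.
-/

/-!
STATEMENT 3: the anisotropic product law
`‖ab‖_{H^{σ+σ'-1,s}} ≤ C ‖a‖_{H^{σ,s}} ‖b‖_{H^{σ',s₀}}` for `σ, σ' < 1`, `σ + σ' > 0`,
`s₀ > 1/2`, `s ≤ s₀`, `s + s₀ ≥ 0`.
-/

noncomputable section
open MeasureTheory Real Complex
open scoped RealInnerProductSpace

abbrev R3 := EuclideanSpace ℝ (Fin 3)

/-- Construct a point of `ℝ³`. -/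
def v3 (a b c : ℝ) : R3 := (WithLp.equiv 2 (Fin 3 → ℝ)).symm ![a, b, c]

/-- The partial derivative `∂ᵢ f` of a scalar function on `ℝ³`. -/
def pd (i : Fin 3) (f : R3 → ℝ) (x : R3) : ℝ := fderiv ℝ f x (EuclideanSpace.single i 1)

/-- The Fourier transform on `ℝ³`. -/
def FT3 (f : R3 → ℂ) (ξ : R3) : ℂ :=
  ∫ x : R3, Complex.exp ((-(2 * π * ⟪x, ξ⟫) : ℝ) * Complex.I) * f x

/-- The inverse Fourier transform on `ℝ³`. -/
def IFT3 (f : R3 → ℂ) (x : R3) : ℂ :=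
  ∫ ξ : R3, Complex.exp (((2 * π * ⟪x, ξ⟫) : ℝ) * Complex.I) * f ξ

/-- The anisotropic weight `(1+|ξ_h|²)^t (1+|ξ₃|²)^s`. -/
def wgt (t s : ℝ) (ξ : R3) : ℝ := (1 + ξ 0 ^ 2 + ξ 1 ^ 2) ^ t * (1 + ξ 2 ^ 2) ^ s

/-- The squared anisotropic Sobolev norm `‖f‖²_{H^{t,s}(ℝ³)}`. -/
def hnormSq (t s : ℝ) (f : R3 → ℝ) : ℝ :=
  ∫ ξ : R3, wgt t s ξ * ‖FT3 (fun x => (f x : ℂ)) ξ‖ ^ 2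

/-- The anisotropic Sobolev norm `‖f‖_{H^{t,s}(ℝ³)}`. -/
def hnorm (t s : ℝ) (f : R3 → ℝ) : ℝ := Real.sqrt (hnormSq t s f)

/-- Membership in the anisotropic Sobolev space `H^{t,s}(ℝ³)`. -/
def memH (t s : ℝ) (f : R3 → ℝ) : Prop :=
  Integrable (fun ξ : R3 => wgt t s ξ * ‖FT3 (fun x => (f x : ℂ)) ξ‖ ^ 2)

/-- Squared `H^{t,s}` norm of a vector field (sum over components). -/
def hnormVecSq (t s : ℝ) (u : R3 → R3) : ℝ := ∑ i : Fin 3, hnormSq t s fun x => u x i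

/-- `H^{t,s}` norm of a vector field. -/
def hnormVec (t s : ℝ) (u : R3 → R3) : ℝ := Real.sqrt (hnormVecSq t s u)

/-- Componentwise membership of a vector field in `H^{t,s}(ℝ³)`. -/
def memHVec (t s : ℝ) (u : R3 → R3) : Prop := ∀ i : Fin 3, memH t s fun x => u x i

/-- Squared `H^{t,s}` norm of the horizontal gradient of a scalar function. -/
def gradhNormSq (t s : ℝ) (f : R3 → ℝ) : ℝ :=
  hnormSq t s (pd 0 f) + hnormSq t s (pd 1 f)

/-- `H^{t,s}` norm of the horizontal gradient of a scalar function. -/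
def gradhNorm (t s : ℝ) (f : R3 → ℝ) : ℝ := Real.sqrt (gradhNormSq t s f)

/-- Membership of the horizontal gradient in `H^{t,s}`. -/
def memHGradh (t s : ℝ) (f : R3 → ℝ) : Prop := memH t s (pd 0 f) ∧ memH t s (pd 1 f)

/-- Squared `H^{t,s}` norm of the horizontal gradient of a vector field. -/
def gradhVecNormSq (t s : ℝ) (u : R3 → R3) : ℝ :=
  ∑ i : Fin 3, gradhNormSq t s fun x => u x i

/-- `H^{t,s}` norm of the horizontal gradient of a vector field. -/
def gradhVecNorm (t s : ℝ) (u : R3 → R3) : ℝ := Real.sqrt (gradhVecNormSq t s u)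

/-- Membership of the horizontal gradient of a vector field in `H^{t,s}`. -/
def memHGradhVec (t s : ℝ) (u : R3 → R3) : Prop := ∀ i : Fin 3, memHGradh t s fun x => u x i

/-- A vector field on `ℝ³` is (pointwise) divergence free. -/
def DivFree (u : R3 → R3) : Prop :=
  ∀ x : R3, pd 0 (fun y => u y 0) x + pd 1 (fun y => u y 1) x + pd 2 (fun y => u y 2) x = 0

/-- A Littlewood–Paley pair: smooth `ψ, φ : ℝ → [0,1]`, `supp ψ ⊆ {|r| ≤ 4/3}`,
`supp φ ⊆ {3/4 ≤ |r| ≤ 8/3}`, with `ψ(r) + Σ_{q ≥ 0} φ(2^{-q} r) = 1`. -/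
structure DyadicPair (ψ φ : ℝ → ℝ) : Prop where
  smooth_ψ : ContDiff ℝ (⊤ : ℕ∞) ψ
  smooth_φ : ContDiff ℝ (⊤ : ℕ∞) φ
  range_ψ : ∀ r, ψ r ∈ Set.Icc (0 : ℝ) 1
  range_φ : ∀ r, φ r ∈ Set.Icc (0 : ℝ) 1
  supp_ψ : ∀ r, ψ r ≠ 0 → |r| ≤ 4 / 3
  supp_φ : ∀ r, φ r ≠ 0 → 3 / 4 ≤ |r| ∧ |r| ≤ 8 / 3
  partition : ∀ r : ℝ, ψ r + ∑' q : ℕ, φ ((2 : ℝ) ^ (-(q : ℤ)) * r) = 1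

/-- The nonhomogeneous dyadic multiplier: `φ(2^{-q}|r|)` for `q ≥ 0`, `ψ(|r|)` for
`q = -1`, and `0` for `q ≤ -2`. -/
def dmul (ψ φ : ℝ → ℝ) (q : ℤ) (r : ℝ) : ℝ :=
  if 0 ≤ q then φ ((2 : ℝ) ^ (-q) * |r|) else if q = -1 then ψ |r| else 0

/-- The vertical dyadic block `Δ_q^v f = 𝓕⁻¹(φ(2^{-q}|ξ₃|) f̂)` of a scalar function on `ℝ³`. -/
def Dv (ψ φ : ℝ → ℝ) (q : ℤ) (f : R3 → ℝ) (x : R3) : ℝ :=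
  (IFT3 (fun ξ => (dmul ψ φ q (ξ 2) : ℂ) * FT3 (fun y => (f y : ℂ)) ξ) x).re

/-- The vertical low-frequency cut-off `S_q^v f = Σ_{q' ≤ q-1} Δ_{q'}^v f`. -/
def Sv (ψ φ : ℝ → ℝ) (q : ℤ) (f : R3 → ℝ) (x : R3) : ℝ :=
  ∑ j ∈ Finset.Icc (-1 : ℤ) (q - 1), Dv ψ φ j f x

/-- The `L²(ℝ³)` inner product of two real functions. -/
def l2ip (f g : R3 → ℝ) : ℝ := ∫ x : R3, f x * g x

/-- Sum over dyadic indices `q ≥ -1`. -/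
def sumQ (g : ℤ → ℝ) : ℝ := ∑' n : ℕ, g ((n : ℤ) - 1)

/-! ### Pointwise bounds for the kernels -/

/-- If `x` is the smallest of the three brackets, the other two are comparable and the weight
`x^{-α} y^{-β} z^{-γ}`, critical in the sense that `α + β + γ = 1`, is controlled by `x` and one
of them alone. The exponent `α` may be raised to any `a ≥ α`. -/
lemma crit_aux {α β γ a x y z : ℝ} (h : α + β + γ = 1) (ha : α ≤ a) (hx : 0 < x)
    (hxy : x ≤ y) (hz : 0 < z) (hyz : y ≤ 4 * z) (hzy : z ≤ 4 * y) :
    x ^ (-α) * y ^ (-β) * z ^ (-γ) ≤ 4 ^ |γ| * (x ^ (-a) * y ^ (-(1 - a))) := by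
  have hy : 0 < y := hx.trans_le hxy
  have h1 : z ^ (-γ) ≤ 4 ^ |γ| * y ^ (-γ) := by
    rcases le_total 0 γ with hγ | hγ
    · rw [abs_of_nonneg hγ]
      have h4 : (y / 4) ^ γ ≤ z ^ γ := Real.rpow_le_rpow (by positivity) (by linarith) hγ
      rw [Real.div_rpow hy.le (by norm_num)] at h4
      have hp : (0 : ℝ) < 4 ^ γ := by positivity
      have hzp : 0 < z ^ γ := by positivity
      have hyp : 0 < y ^ γ := by positivity
      rw [Real.rpow_neg hz.le, Real.rpow_neg hy.le, ← div_eq_mul_inv, inv_eq_one_div,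
        div_le_div_iff₀ hzp hyp]
      rw [div_le_iff₀ hp] at h4
      linarith
    · rw [abs_of_nonpos hγ, ← Real.mul_rpow (by norm_num) hy.le]
      exact Real.rpow_le_rpow hz.le hzy (by linarith)
  have h2 : x ^ (-α) ≤ x ^ (-a) * y ^ (a - α) := by
    have h3 : x ^ (a - α) ≤ y ^ (a - α) := Real.rpow_le_rpow hx.le hxy (by linarith)
    calc x ^ (-α) = x ^ (-a) * x ^ (a - α) := by rw [← Real.rpow_add hx]; ring_nf
      _ ≤ _ := by gcongr
  calc x ^ (-α) * y ^ (-β) * z ^ (-γ)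
      ≤ (x ^ (-a) * y ^ (a - α)) * y ^ (-β) * (4 ^ |γ| * y ^ (-γ)) := by gcongr
    _ = 4 ^ |γ| * (x ^ (-a) * (y ^ (a - α) * y ^ (-β) * y ^ (-γ))) := by ring
    _ = _ := by
      rw [← Real.rpow_add hy, ← Real.rpow_add hy]
      congr 3; linarith

/-- `crit_aux`, with either of the two large brackets kept. -/
lemma crit_aux₂ {α β γ a L x y z : ℝ} (h : α + β + γ = 1) (ha : α ≤ a) (hx : 0 < x)
    (hxy : x ≤ y) (hxz : x ≤ z) (hyz : y ≤ 2 * (x + z)) (hzy : z ≤ 2 * (x + y))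
    (hβ : |β| ≤ L) (hγ : |γ| ≤ L) :
    x ^ (-α) * y ^ (-β) * z ^ (-γ) ≤ 4 ^ L * (x ^ (-a) * y ^ (-(1 - a))) ∧
    x ^ (-α) * y ^ (-β) * z ^ (-γ) ≤ 4 ^ L * (x ^ (-a) * z ^ (-(1 - a))) := by
  have hy : 0 < y := hx.trans_le hxy
  have hz : 0 < z := hx.trans_le hxz
  constructor
  · refine (crit_aux h ha hx hxy hz (by linarith) (by linarith)).trans ?_
    gcongr
    norm_num
  · have := crit_aux (α := α) (β := γ) (γ := β) (by linarith) ha hx hxz hy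
      (by linarith) (by linarith)
    calc _ = x ^ (-α) * z ^ (-γ) * y ^ (-β) := by ring
      _ ≤ _ := this
      _ ≤ _ := by
        gcongr
        norm_num

/-- The squared vertical kernel is bounded by `⟨·⟩^{-2 s₀}` of one of the three frequencies
(`x`, `y`, `z` are the squared brackets of the frequencies of `a`, `b` and `ab`). -/
lemma vert_aux {s s₀ x y z : ℝ} (h1 : s ≤ s₀) (h2 : 0 ≤ s + s₀)
    (hx : 0 < x) (hy : 0 < y) (hz : 0 < z) (hxyz : x ≤ 2 * (y + z)) (hzxy : z ≤ 2 * (x + y)) :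
    z ^ s * x ^ (-s) * y ^ (-s₀) ≤ 4 ^ |s| * x ^ (-s₀) ∨
    z ^ s * x ^ (-s) * y ^ (-s₀) ≤ 4 ^ |s| * y ^ (-s₀) ∨
    z ^ s * x ^ (-s) * y ^ (-s₀) ≤ 4 ^ |s| * z ^ (-s₀) := by
  have key : ∀ t u v : ℝ, 0 ≤ t → t ≤ s₀ → 0 < u → 0 < v → v ≤ 2 * (u + y) →
      v ^ t * u ^ (-t) * y ^ (-s₀) ≤ 4 ^ t * u ^ (-s₀) ∨
      v ^ t * u ^ (-t) * y ^ (-s₀) ≤ 4 ^ t * y ^ (-s₀) := by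
    intro t u v ht hts hu hv huv
    rcases le_total u y with h | h
    · left
      have e : v ^ t ≤ 4 ^ t * y ^ t := by
        rw [← Real.mul_rpow (by norm_num) hy.le]
        exact Real.rpow_le_rpow hv.le (by linarith) ht
      have e2 : y ^ (t - s₀) ≤ u ^ (t - s₀) :=
        Real.rpow_le_rpow_of_nonpos hu h (by linarith)
      calc v ^ t * u ^ (-t) * y ^ (-s₀) ≤ (4 ^ t * y ^ t) * u ^ (-t) * y ^ (-s₀) := by gcongr
        _ = 4 ^ t * (y ^ (t - s₀) * u ^ (-t)) := by
          rw [sub_eq_add_neg, Real.rpow_add hy]; ring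
        _ ≤ 4 ^ t * (u ^ (t - s₀) * u ^ (-t)) := by gcongr
        _ = _ := by rw [← Real.rpow_add hu]; ring_nf
    · right
      have e : v ^ t ≤ 4 ^ t * u ^ t := by
        rw [← Real.mul_rpow (by norm_num) hu.le]
        exact Real.rpow_le_rpow hv.le (by linarith) ht
      calc v ^ t * u ^ (-t) * y ^ (-s₀) ≤ (4 ^ t * u ^ t) * u ^ (-t) * y ^ (-s₀) := by gcongr
        _ = 4 ^ t * (u ^ t * u ^ (-t)) * y ^ (-s₀) := by ring
        _ = _ := by rw [← Real.rpow_add hu]; simp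
  rcases le_total 0 s with hs | hs
  · rw [abs_of_nonneg hs]
    rcases key s x z hs h1 hx hz hzxy with h | h
    · exact Or.inl h
    · exact Or.inr (Or.inl h)
  · rw [abs_of_nonpos hs]
    have := key (-s) z x (by linarith) (by linarith) hz hx (by linarith)
    rw [neg_neg, mul_comm (x ^ (-s))] at this
    rcases this with h | h
    · exact Or.inr (Or.inr h)
    · exact Or.inr (Or.inl h)

/-! ### Integrability of the majorant kernel -/

/-- Squared horizontal bracket `1 + |ξ_h|²`. -/
def Jh (ξ : R3) : ℝ := 1 + ξ 0 ^ 2 + ξ 1 ^ 2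

/-- Squared vertical bracket `1 + |ξ₃|²`. -/
def Jv (ξ : R3) : ℝ := 1 + ξ 2 ^ 2

/-- The one-dimensional factor `1_{x² ≤ M} ⟨x⟩^{-a} M^{-(1-a)/2}`; for `a < 1` its integral is
bounded uniformly in `M`. -/
def psi (a M x : ℝ) : ENNReal :=
  if x ^ 2 ≤ M then ENNReal.ofReal ((1 + x ^ 2) ^ (-a / 2) * M ^ (-(1 - a) / 2)) else 0

/-- The two-dimensional factor in the horizontal variables, a product of one-dimensional ones. -/
def NN (a M : ℝ) (ξ : R3) : ENNReal := psi a M (ξ 0) * psi a M (ξ 1)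

/-- The one-dimensional factor `⟨x⟩^{-2 s₀}`, as an extended nonnegative real. -/
def rho (s₀ x : ℝ) : ENNReal := ENNReal.ofReal ((1 + x ^ 2) ^ (-s₀))

/-- A majorant kernel whose integral over `ξ` is bounded uniformly in `c` when `0 ≤ a < 1` and
`s₀ > 1/2`. -/
def QQ (a s₀ : ℝ) (c ξ : R3) : ENNReal :=
  (NN a (Jh c) ξ + NN a (Jh c) (c - ξ)) * (rho s₀ (ξ 2) + rho s₀ ((c - ξ) 2))

lemma Jh_pos (ξ : R3) : 0 < Jh ξ := by unfold Jh; positivity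
lemma Jv_pos (ξ : R3) : 0 < Jv ξ := by unfold Jv; positivity

lemma psi_neg (a M x : ℝ) : psi a M (-x) = psi a M x := by simp [psi]
lemma rho_neg (s₀ x : ℝ) : rho s₀ (-x) = rho s₀ x := by simp [rho]

lemma NN_neg (a M : ℝ) (ξ : R3) : NN a M (-ξ) = NN a M ξ := by simp [NN, psi_neg]

lemma measurable_psi (a : ℝ) : Measurable (fun p : ℝ × ℝ => psi a p.1 p.2) := by
  unfold psi
  refine Measurable.ite (measurableSet_le (by fun_prop) (by fun_prop)) ?_ measurable_const
  fun_prop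

lemma measurable_rho (s₀ : ℝ) : Measurable (rho s₀) := by
  unfold rho; fun_prop

lemma measurable_QQ (a s₀ : ℝ) : Measurable (fun p : R3 × R3 => QQ a s₀ p.1 p.2) := by
  have hc : ∀ i : Fin 3, Measurable (fun ξ : R3 => ξ i) := fun i => by fun_prop
  have hJ : Measurable Jh := by unfold Jh; fun_prop
  have hN : Measurable (fun p : ℝ × R3 => NN a p.1 p.2) := by
    unfold NN
    exact ((measurable_psi a).comp (measurable_fst.prodMk ((hc 0).comp measurable_snd))).mul
      ((measurable_psi a).comp (measurable_fst.prodMk ((hc 1).comp measurable_snd)))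
  have hs : Measurable (fun p : R3 × R3 => p.1 - p.2) := by fun_prop
  unfold QQ
  exact ((hN.comp ((hJ.comp measurable_fst).prodMk measurable_snd)).add
    (hN.comp ((hJ.comp measurable_fst).prodMk hs))).mul
    (((measurable_rho s₀).comp ((hc 2).comp measurable_snd)).add
      ((measurable_rho s₀).comp ((hc 2).comp hs)))

lemma lintegral_R3_prod (f₀ f₁ f₂ : ℝ → ENNReal) (h₀ : Measurable f₀) (h₁ : Measurable f₁)
    (h₂ : Measurable f₂) :
    ∫⁻ ξ : R3, f₀ (ξ 0) * f₁ (ξ 1) * f₂ (ξ 2) = (∫⁻ x, f₀ x) * (∫⁻ x, f₁ x) * ∫⁻ x, f₂ x := by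
  have e2 := (volume_preserving_finTwoArrow ℝ).lintegral_comp_emb
    (MeasurableEquiv.measurableEmbedding _) (fun p : ℝ × ℝ => f₁ p.2 * f₀ p.1)
  have e3 := (volume_preserving_piFinSuccAbove (fun _ : Fin 3 => ℝ) 2).lintegral_comp_emb
    (MeasurableEquiv.measurableEmbedding _)
    (fun p : ℝ × (Fin 2 → ℝ) => f₂ p.1 * (f₁ (p.2 1) * f₀ (p.2 0)))
  have e4 := (EuclideanSpace.volume_preserving_symm_measurableEquiv_toLp (Fin 3)).lintegral_comp_emb
    (MeasurableEquiv.measurableEmbedding _) (fun p : Fin 3 → ℝ => f₂ (p 2) * (f₁ (p 1) * f₀ (p 0)))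
  have e5 : ∫⁻ p : ℝ × ℝ, f₁ p.2 * f₀ p.1 = (∫⁻ x, f₀ x) * ∫⁻ x, f₁ x := by
    simp_rw [mul_comm (f₁ _)]
    exact lintegral_prod_mul h₀.aemeasurable h₁.aemeasurable
  have e6 : ∫⁻ p : ℝ × (Fin 2 → ℝ), f₂ p.1 * (f₁ (p.2 1) * f₀ (p.2 0)) =
      (∫⁻ x, f₂ x) * ∫⁻ p : Fin 2 → ℝ, f₁ (p 1) * f₀ (p 0) :=
    lintegral_prod_mul h₂.aemeasurable (f := f₂) (g := fun p : Fin 2 → ℝ => f₁ (p 1) * f₀ (p 0))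
      (by fun_prop)
  calc ∫⁻ ξ : R3, f₀ (ξ 0) * f₁ (ξ 1) * f₂ (ξ 2)
      = ∫⁻ ξ : R3, f₂ (ξ 2) * (f₁ (ξ 1) * f₀ (ξ 0)) := lintegral_congr fun ξ => by ring
    _ = ∫⁻ p : Fin 3 → ℝ, f₂ (p 2) * (f₁ (p 1) * f₀ (p 0)) := e4
    _ = _ := e3
    _ = _ := e6
    _ = (∫⁻ x, f₂ x) * ((∫⁻ x, f₀ x) * ∫⁻ x, f₁ x) := by rw [← e5, ← e2]; rfl
    _ = _ := by ring

/-- Since `a < 1`, comparison with `|x|^{-a}` gives `∫_{|x| ≤ R} ⟨x⟩^{-a} dx ≤ 2 R^{1-a} / (1-a)`;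
the second factor of `psi`, with `R = √M`, makes this scale invariant. -/
lemma lintegral_psi_le {a M : ℝ} (ha0 : 0 ≤ a) (ha : a < 1) (hM : 0 < M) :
    ∫⁻ x, psi a M x ≤ ENNReal.ofReal (2 / (1 - a)) := by
  set R := √M with hR
  have hRpos : 0 < R := Real.sqrt_pos.2 hM
  have hMR : M ^ (-(1 - a) / 2) = R ^ (-(1 - a)) := by
    rw [hR, Real.sqrt_eq_rpow, ← Real.rpow_mul hM.le]; ring_nf
  set F : ℝ → ℝ := fun y => (Set.Ioc 0 R).indicator (fun y => y ^ (-a) * R ^ (-(1 - a))) y with hF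
  have hInt : IntegrableOn (fun y : ℝ => y ^ (-a) * R ^ (-(1 - a))) (Set.Ioc 0 R) := by
    have := (intervalIntegral.intervalIntegrable_rpow' (a := 0) (b := R) (r := -a)
      (by linarith)).mul_const (R ^ (-(1 - a)))
    rwa [intervalIntegrable_iff_integrableOn_Ioc_of_le hRpos.le] at this
  have hFi : Integrable F := (integrable_indicator_iff measurableSet_Ioc).2 hInt
  have hFabs : Integrable (fun x => F |x|) := by
    have h1 : IntegrableOn (fun x => F |x|) (Set.Ioi 0) :=
      hFi.integrableOn.congr_fun (fun x hx => by simp [abs_of_pos (Set.mem_Ioi.1 hx)])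
        measurableSet_Ioi
    rw [← integrableOn_univ, ← Set.Iic_union_Ioi (a := (0 : ℝ)), integrableOn_union]
    refine ⟨?_, h1⟩
    rw [integrableOn_Iic_iff_integrableOn_Iio]
    have := (Measure.measurePreserving_neg (volume : Measure ℝ)).integrableOn_comp_preimage
      (MeasurableEquiv.neg ℝ).measurableEmbedding (f := fun x => F |x|) (s := Set.Ioi 0)
    have h2 := this.2 h1
    simpa [Function.comp_def] using h2
  have hFnn : ∀ x, 0 ≤ F x := fun x => Set.indicator_nonneg
    (fun y hy => mul_nonneg (Real.rpow_nonneg hy.1.le _) (Real.rpow_nonneg hRpos.le _)) x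
  have hval : ∫ x, F |x| = 2 / (1 - a) := by
    rw [integral_comp_abs (f := F), hF]
    rw [setIntegral_indicator measurableSet_Ioc]
    have : Set.Ioi (0 : ℝ) ∩ Set.Ioc 0 R = Set.Ioc 0 R := by
      ext x; simp
    rw [this, integral_mul_const, ← intervalIntegral.integral_of_le hRpos.le,
      integral_rpow (Or.inl (by linarith)), Real.zero_rpow (by linarith), sub_zero]
    have : R ^ (-a + 1) * R ^ (-(1 - a)) = 1 := by
      rw [← Real.rpow_add hRpos]; simp
    have h1a : -a + 1 = 1 - a := by ring
    rw [div_mul_eq_mul_div, this, h1a]; ring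
  rw [← hval, ofReal_integral_eq_lintegral_ofReal hFabs (Filter.Eventually.of_forall
    fun x => hFnn _)]
  refine lintegral_mono_ae ?_
  filter_upwards [compl_mem_ae_iff.2 (measure_singleton (0 : ℝ))] with x hx
  have hx0 : 0 < |x| := abs_pos.2 (by simpa using hx)
  unfold psi
  split_ifs with h
  · have hle : |x| ≤ R := Real.abs_le_sqrt h
    rw [hF]
    simp only []
    rw [Set.indicator_of_mem (show |x| ∈ Set.Ioc 0 R from ⟨hx0, hle⟩), hMR]
    refine ENNReal.ofReal_le_ofReal ?_
    gcongr
    have : |x| ^ (-a) = (x ^ 2) ^ (-a / 2) := by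
      rw [← sq_abs, ← Real.rpow_natCast, ← Real.rpow_mul hx0.le]; congr 1; push_cast; ring
    rw [this]
    refine Real.rpow_le_rpow_of_nonpos ?_ (by linarith) (by linarith)
    rw [← sq_abs]; positivity
  · exact zero_le

lemma lintegral_rho_lt_top {s₀ : ℝ} (hs₀ : 1 / 2 < s₀) : ∫⁻ x, rho s₀ x < ⊤ := by
  have h := integrable_rpow_neg_one_add_norm_sq (E := ℝ) (μ := volume) (r := 2 * s₀)
    (by simp; linarith)
  have h2 := h.lintegral_lt_top
  convert! h2 using 3 with x
  unfold rho
  congr 1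
  simp only [Real.norm_eq_abs, sq_abs]
  congr 1; ring

lemma lintegral_QQ_le (a s₀ : ℝ) (ha0 : 0 ≤ a) (ha : a < 1) (c : R3) :
    ∫⁻ ξ, QQ a s₀ c ξ ≤
      4 * (ENNReal.ofReal (2 / (1 - a)) * ENNReal.ofReal (2 / (1 - a)) * ∫⁻ x, rho s₀ x) := by
  have hψ : Measurable (psi a (Jh c)) := (measurable_psi a).comp measurable_prodMk_left
  have hρ := measurable_rho s₀
  set D := ENNReal.ofReal (2 / (1 - a))
  set I := ∫⁻ x, rho s₀ x
  have hD : ∫⁻ x, psi a (Jh c) x ≤ D := lintegral_psi_le ha0 ha (Jh_pos c)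
  have hD' : ∀ b : ℝ, ∫⁻ x, psi a (Jh c) (b - x) ≤ D := fun b => by
    rw [lintegral_sub_left_eq_self (psi a (Jh c)) b]; exact hD
  have hI' : ∀ b : ℝ, ∫⁻ x, rho s₀ (b - x) = I := fun b =>
    lintegral_sub_left_eq_self (rho s₀) b
  have hψ' : ∀ b : ℝ, Measurable (fun x => psi a (Jh c) (b - x)) := fun b =>
    hψ.comp (measurable_const.sub measurable_id)
  have hρ' : ∀ b : ℝ, Measurable (fun x => rho s₀ (b - x)) := fun b =>
    hρ.comp (measurable_const.sub measurable_id)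
  have hc : ∀ i : Fin 3, Measurable (fun ξ : R3 => ξ i) := fun i => by fun_prop
  have hm : Measurable (fun x => rho s₀ x + rho s₀ (c 2 - x)) := hρ.add (hρ' _)
  have hs : ∫⁻ x, (rho s₀ x + rho s₀ (c 2 - x)) = 2 * I := by
    rw [lintegral_add_left hρ, hI', two_mul]
  calc ∫⁻ ξ, QQ a s₀ c ξ
      = ∫⁻ ξ : R3, (psi a (Jh c) (ξ 0) * psi a (Jh c) (ξ 1) * (rho s₀ (ξ 2) + rho s₀ (c 2 - ξ 2))
        + psi a (Jh c) (c 0 - ξ 0) * psi a (Jh c) (c 1 - ξ 1)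
          * (rho s₀ (ξ 2) + rho s₀ (c 2 - ξ 2))) := by
        refine lintegral_congr fun ξ => ?_
        simp only [QQ, NN, PiLp.sub_apply]
        ring
    _ = (∫⁻ x, psi a (Jh c) x) * (∫⁻ x, psi a (Jh c) x) * (2 * I)
        + (∫⁻ x, psi a (Jh c) (c 0 - x)) * (∫⁻ x, psi a (Jh c) (c 1 - x)) * (2 * I) := by
        have hm' : Measurable fun ξ : R3 => psi a (Jh c) (ξ 0) * psi a (Jh c) (ξ 1)
            * (rho s₀ (ξ 2) + rho s₀ (c 2 - ξ 2)) :=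
          ((hψ.comp (hc 0)).mul (hψ.comp (hc 1))).mul (hm.comp (hc 2))
        rw [lintegral_add_left hm',
          lintegral_R3_prod _ _ _ hψ hψ hm,
          lintegral_R3_prod _ _ _ (hψ' (c 0)) (hψ' (c 1)) hm, hs]
    _ ≤ D * D * (2 * I) + D * D * (2 * I) := by
        gcongr
        · exact hD' _
        · exact hD' _
    _ = 4 * (D * D * I) := by ring

lemma le_NN {a M : ℝ} (ha0 : 0 ≤ a) {ξ : R3} (hM : Jh ξ ≤ M) :
    ENNReal.ofReal (Jh ξ ^ (-a) * M ^ (-(1 - a))) ≤ NN a M ξ := by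
  have hJ := Jh_pos ξ
  have hM0 : 0 < M := hJ.trans_le hM
  have h0 : ξ 0 ^ 2 ≤ M := by unfold Jh at hM; nlinarith [sq_nonneg (ξ 1)]
  have h1 : ξ 1 ^ 2 ≤ M := by unfold Jh at hM; nlinarith [sq_nonneg (ξ 0)]
  unfold NN psi
  rw [if_pos h0, if_pos h1, ← ENNReal.ofReal_mul (by positivity)]
  refine ENNReal.ofReal_le_ofReal ?_
  have e1 : M ^ (-(1 - a)) = M ^ (-(1 - a) / 2) * M ^ (-(1 - a) / 2) := by
    rw [← Real.rpow_add hM0]; ring_nf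
  have e2 : Jh ξ ^ (-a) = Jh ξ ^ (-a / 2) * Jh ξ ^ (-a / 2) := by
    rw [← Real.rpow_add hJ]; ring_nf
  have e3 : Jh ξ ^ (-a / 2) ≤ (1 + ξ 0 ^ 2) ^ (-a / 2) :=
    Real.rpow_le_rpow_of_nonpos (by positivity)
      (by unfold Jh; nlinarith [sq_nonneg (ξ 1)]) (by linarith)
  have e4 : Jh ξ ^ (-a / 2) ≤ (1 + ξ 1 ^ 2) ^ (-a / 2) :=
    Real.rpow_le_rpow_of_nonpos (by positivity)
      (by unfold Jh; nlinarith [sq_nonneg (ξ 0)]) (by linarith)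
  calc _ = (Jh ξ ^ (-a / 2) * M ^ (-(1 - a) / 2)) * (Jh ξ ^ (-a / 2) * M ^ (-(1 - a) / 2)) := by
        rw [e1, e2]; ring
    _ ≤ _ := by gcongr

/-! ### Domination of the kernel -/

lemma wgt_eq (t s : ℝ) (ξ : R3) : wgt t s ξ = Jh ξ ^ t * Jv ξ ^ s := rfl

lemma wgt_pos (t s : ℝ) (ξ : R3) : 0 < wgt t s ξ := by
  rw [wgt_eq]
  exact mul_pos (Real.rpow_pos_of_pos (Jh_pos ξ) _) (Real.rpow_pos_of_pos (Jv_pos ξ) _)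

/-- The squared kernel of the weighted convolution: `r` is the frequency of the product, `q` that
of `b` and `r - q` that of `a`. -/
def KK (σ σ' s s₀ : ℝ) (r q : R3) : ℝ :=
  wgt (σ + σ' - 1) s r / (wgt σ s (r - q) * wgt σ' s₀ q)

lemma ofReal_le_NN_mul_rho {a s₀ C₁ C₂ u v : ℝ} (ha : 0 ≤ a) {c ξ η : R3}
    (hu : 0 ≤ u) (hC₁ : 0 ≤ C₁) (hξ : Jh ξ ≤ Jh c)
    (h₁ : u ≤ C₁ * (Jh ξ ^ (-a) * Jh c ^ (-(1 - a)))) (h₂ : v ≤ C₂ * Jv η ^ (-s₀))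
    (hC₂ : 0 ≤ C₂) :
    ENNReal.ofReal (u * v) ≤ ENNReal.ofReal (C₁ * C₂) * (NN a (Jh c) ξ * rho s₀ (η 2)) := by
  have h₃ : ENNReal.ofReal u ≤ ENNReal.ofReal C₁ * NN a (Jh c) ξ := by
    refine (ENNReal.ofReal_le_ofReal h₁).trans ?_
    rw [ENNReal.ofReal_mul hC₁]
    gcongr
    exact le_NN ha hξ
  have h₄ : ENNReal.ofReal v ≤ ENNReal.ofReal C₂ * rho s₀ (η 2) := by
    refine (ENNReal.ofReal_le_ofReal h₂).trans ?_
    rw [ENNReal.ofReal_mul hC₂]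
    rfl
  calc ENNReal.ofReal (u * v) = ENNReal.ofReal u * ENNReal.ofReal v := ENNReal.ofReal_mul hu
    _ ≤ _ := mul_le_mul' h₃ h₄
    _ = _ := by rw [ENNReal.ofReal_mul hC₁]; ring

/-- The horizontal kernel is concentrated on one variable (the smallest frequency), and so is the
vertical one. Whatever these two variables are, one of the three frequencies is neither of them;
it can be held fixed, and the kernel is then square integrable in the remaining one. -/
lemma KK_le {σ σ' s s₀ a : ℝ} (ha0 : 0 ≤ a) (hσ : σ ≤ a) (hσ' : σ' ≤ a) (hσσ' : 1 - σ - σ' ≤ a)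
    (hss₀ : s ≤ s₀) (hsum : 0 ≤ s + s₀) (r q : R3) :
    ENNReal.ofReal (KK σ σ' s s₀ r q) ≤
      ENNReal.ofReal (4 ^ (|σ| + |σ'| + |1 - σ - σ'|) * 4 ^ |s|) *
        (QQ a s₀ r q + QQ a s₀ q r + QQ a s₀ (r - q) r) := by
  obtain ⟨p, hp⟩ : ∃ p, p = r - q := ⟨_, rfl⟩
  have hrpq : ∀ i, r i = p i + q i := fun i => by simp [hp]
  set L := |σ| + |σ'| + |1 - σ - σ'| with hL
  have hC₁ : (0 : ℝ) ≤ 4 ^ L := by positivity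
  have hC₂ : (0 : ℝ) ≤ 4 ^ |s| := by positivity
  have hxh := Jh_pos p
  have hyh := Jh_pos q
  have hzh := Jh_pos r
  have hxv := Jv_pos p
  have hyv := Jv_pos q
  have hzv := Jv_pos r
  -- each squared bracket is at most twice the sum of the other two
  have tz : Jh r ≤ 2 * (Jh p + Jh q) := by
    simp only [Jh, hrpq]; nlinarith [sq_nonneg (p 0 - q 0), sq_nonneg (p 1 - q 1)]
  have tx : Jh p ≤ 2 * (Jh q + Jh r) := by
    simp only [Jh, hrpq]; nlinarith [sq_nonneg (p 0 + 2 * q 0), sq_nonneg (p 1 + 2 * q 1)]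
  have ty : Jh q ≤ 2 * (Jh p + Jh r) := by
    simp only [Jh, hrpq]; nlinarith [sq_nonneg (2 * p 0 + q 0), sq_nonneg (2 * p 1 + q 1)]
  have vz : Jv r ≤ 2 * (Jv p + Jv q) := by
    simp only [Jv, hrpq]; nlinarith [sq_nonneg (p 2 - q 2)]
  have vx : Jv p ≤ 2 * (Jv q + Jv r) := by
    simp only [Jv, hrpq]; nlinarith [sq_nonneg (p 2 + 2 * q 2)]
  have l1 : |σ| ≤ L := by rw [hL]; linarith [abs_nonneg σ', abs_nonneg (1 - σ - σ')]
  have l2 : |σ'| ≤ L := by rw [hL]; linarith [abs_nonneg σ, abs_nonneg (1 - σ - σ')]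
  have l3 : |1 - σ - σ'| ≤ L := by rw [hL]; linarith [abs_nonneg σ, abs_nonneg σ']
  set u := Jh p ^ (-σ) * Jh q ^ (-σ') * Jh r ^ (-(1 - σ - σ')) with hu
  set v := Jv r ^ s * Jv p ^ (-s) * Jv q ^ (-s₀) with hv
  have hu0 : 0 ≤ u := by positivity
  have hK : KK σ σ' s s₀ r q = u * v := by
    have e1 : Jh p ^ σ ≠ 0 := (Real.rpow_pos_of_pos hxh _).ne'
    have e2 : Jh q ^ σ' ≠ 0 := (Real.rpow_pos_of_pos hyh _).ne'
    have e3 : Jv p ^ s ≠ 0 := (Real.rpow_pos_of_pos hxv _).ne'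
    have e4 : Jv q ^ s₀ ≠ 0 := (Real.rpow_pos_of_pos hyv _).ne'
    have e5 : -(1 - σ - σ') = σ + σ' - 1 := by ring
    rw [hu, hv, KK, ← hp, wgt_eq, wgt_eq, wgt_eq, Real.rpow_neg hxh.le, Real.rpow_neg hyh.le,
      Real.rpow_neg hxv.le, Real.rpow_neg hyv.le, e5]
    field_simp
  have qr : QQ a s₀ r q = (NN a (Jh r) q + NN a (Jh r) p) * (rho s₀ (q 2) + rho s₀ (p 2)) := by
    rw [QQ, ← hp]
  have qq : QQ a s₀ q r = (NN a (Jh q) r + NN a (Jh q) p) * (rho s₀ (r 2) + rho s₀ (p 2)) := by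
    have : q - r = -p := by rw [hp]; abel
    rw [QQ, this, NN_neg, PiLp.neg_apply, rho_neg]
  have qp : QQ a s₀ p r = (NN a (Jh p) r + NN a (Jh p) q) * (rho s₀ (r 2) + rho s₀ (q 2)) := by
    have : p - r = -q := by rw [hp]; abel
    rw [QQ, this, NN_neg, PiLp.neg_apply, rho_neg]
  rw [hK, ← hp]
  have Rr : ∀ {X : ENNReal}, X ≤ QQ a s₀ r q → X ≤ QQ a s₀ r q + QQ a s₀ q r + QQ a s₀ p r :=
    fun h => h.trans (le_self_add.trans le_self_add)
  have Rq : ∀ {X : ENNReal}, X ≤ QQ a s₀ q r → X ≤ QQ a s₀ r q + QQ a s₀ q r + QQ a s₀ p r :=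
    fun h => h.trans (le_add_self.trans le_self_add)
  have Rp : ∀ {X : ENNReal}, X ≤ QQ a s₀ p r → X ≤ QQ a s₀ r q + QQ a s₀ q r + QQ a s₀ p r :=
    fun h => h.trans le_add_self
  have hV := vert_aux hss₀ hsum hxv hyv hzv vx vz
  rw [← hv] at hV
  rcases le_total (Jh p) (Jh q) with hpq | hpq
  · rcases le_total (Jh p) (Jh r) with hpr | hpr
    · -- `p` is the smallest horizontal frequency
      obtain ⟨hA, hB⟩ := crit_aux₂ (α := σ) (β := σ') (γ := 1 - σ - σ') (by ring) hσ hxh hpq hpr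
        ty tz l2 l3
      rw [← hu] at hA hB
      rcases hV with h | h | h
      · refine (ofReal_le_NN_mul_rho ha0 hu0 hC₁ hpr hB h hC₂).trans (mul_le_mul_right (Rr ?_) _)
        rw [qr]; exact mul_le_mul' le_add_self le_add_self
      · refine (ofReal_le_NN_mul_rho ha0 hu0 hC₁ hpr hB h hC₂).trans (mul_le_mul_right (Rr ?_) _)
        rw [qr]; exact mul_le_mul' le_add_self le_self_add
      · refine (ofReal_le_NN_mul_rho ha0 hu0 hC₁ hpq hA h hC₂).trans (mul_le_mul_right (Rq ?_) _)
        rw [qq]; exact mul_le_mul' le_add_self le_self_add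
    · -- `r` is the smallest horizontal frequency
      obtain ⟨hA, hB⟩ := crit_aux₂ (α := 1 - σ - σ') (β := σ) (γ := σ') (by ring) hσσ' hzh hpr
        (hpr.trans hpq) (by linarith) (by linarith) l1 l2
      have e : Jh r ^ (-(1 - σ - σ')) * Jh p ^ (-σ) * Jh q ^ (-σ') = u := by rw [hu]; ring
      rw [e] at hA hB
      rcases hV with h | h | h
      · refine (ofReal_le_NN_mul_rho ha0 hu0 hC₁ (hpr.trans hpq) hB h hC₂).trans
          (mul_le_mul_right (Rq ?_) _)
        rw [qq]; exact mul_le_mul' le_self_add le_add_self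
      · refine (ofReal_le_NN_mul_rho ha0 hu0 hC₁ hpr hA h hC₂).trans (mul_le_mul_right (Rp ?_) _)
        rw [qp]; exact mul_le_mul' le_self_add le_add_self
      · refine (ofReal_le_NN_mul_rho ha0 hu0 hC₁ hpr hA h hC₂).trans (mul_le_mul_right (Rp ?_) _)
        rw [qp]; exact mul_le_mul' le_self_add le_self_add
  · rcases le_total (Jh q) (Jh r) with hqr | hqr
    · -- `q` is the smallest horizontal frequency
      obtain ⟨hA, hB⟩ := crit_aux₂ (α := σ') (β := σ) (γ := 1 - σ - σ') (by ring) hσ' hyh hpq hqr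
        tx (by linarith) l1 l3
      have e : Jh q ^ (-σ') * Jh p ^ (-σ) * Jh r ^ (-(1 - σ - σ')) = u := by rw [hu]; ring
      rw [e] at hA hB
      rcases hV with h | h | h
      · refine (ofReal_le_NN_mul_rho ha0 hu0 hC₁ hqr hB h hC₂).trans (mul_le_mul_right (Rr ?_) _)
        rw [qr]; exact mul_le_mul' le_self_add le_add_self
      · refine (ofReal_le_NN_mul_rho ha0 hu0 hC₁ hqr hB h hC₂).trans (mul_le_mul_right (Rr ?_) _)
        rw [qr]; exact mul_le_mul' le_self_add le_self_add
      · refine (ofReal_le_NN_mul_rho ha0 hu0 hC₁ hpq hA h hC₂).trans (mul_le_mul_right (Rp ?_) _)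
        rw [qp]; exact mul_le_mul' le_add_self le_self_add
    · -- `r` is the smallest horizontal frequency
      obtain ⟨hA, hB⟩ := crit_aux₂ (α := 1 - σ - σ') (β := σ) (γ := σ') (by ring) hσσ' hzh
        (hqr.trans hpq) hqr (by linarith) (by linarith) l1 l2
      have e : Jh r ^ (-(1 - σ - σ')) * Jh p ^ (-σ) * Jh q ^ (-σ') = u := by rw [hu]; ring
      rw [e] at hA hB
      rcases hV with h | h | h
      · refine (ofReal_le_NN_mul_rho ha0 hu0 hC₁ hqr hB h hC₂).trans (mul_le_mul_right (Rq ?_) _)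
        rw [qq]; exact mul_le_mul' le_self_add le_add_self
      · refine (ofReal_le_NN_mul_rho ha0 hu0 hC₁ (hqr.trans hpq) hA h hC₂).trans
          (mul_le_mul_right (Rp ?_) _)
        rw [qp]; exact mul_le_mul' le_self_add le_add_self
      · refine (ofReal_le_NN_mul_rho ha0 hu0 hC₁ (hqr.trans hpq) hA h hC₂).trans
          (mul_le_mul_right (Rp ?_) _)
        rw [qp]; exact mul_le_mul' le_self_add le_self_add

/-! ### The trilinear estimate -/

lemma lintegral_mul_le_sq {α : Type*} [MeasurableSpace α] (μ : Measure α) {f g : α → ENNReal}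
    (hf : Measurable f) (hg : Measurable g) :
    ∫⁻ x, f x * g x ∂μ ≤
      (∫⁻ x, f x ^ 2 ∂μ) ^ (1 / 2 : ℝ) * (∫⁻ x, g x ^ 2 ∂μ) ^ (1 / 2 : ℝ) := by
  have := ENNReal.lintegral_mul_le_Lp_mul_Lq μ Real.HolderConjugate.two_two
    hf.aemeasurable hg.aemeasurable
  simpa using this

lemma sq_rpow_half (x : ENNReal) : (x ^ (1 / 2 : ℝ)) ^ 2 = x := by
  rw [← ENNReal.rpow_natCast, ← ENNReal.rpow_mul]; norm_num

/-- The trilinear estimate behind the product law: a kernel `K` dominated by three kernels, each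
integrable uniformly in one of the frequencies `r`, `q`, `r - q`, gives a bounded form. Each of
the three pieces is one application of the Cauchy–Schwarz inequality, grouping the kernel with
the function of the frequency held fixed. -/
lemma trilinear {F G H : R3 → ENNReal} (hF : Measurable F) (hG : Measurable G) (hH : Measurable H)
    {S : R3 → R3 → ENNReal} (hS : Measurable (fun p : R3 × R3 => S p.1 p.2)) {C D : ENNReal}
    (hD : ∀ c, ∫⁻ ξ, S c ξ ≤ D) {K : R3 → R3 → ENNReal}
    (hK : ∀ r q, K r q ≤ C * (S r q + S q r + S (r - q) r)) :
    ∫⁻ r, ∫⁻ q, H r * F (r - q) * G q * K r q ^ (1 / 2 : ℝ) ≤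
      3 * (C ^ (1 / 2 : ℝ) * D ^ (1 / 2 : ℝ)) * (∫⁻ ξ, F ξ ^ 2) ^ (1 / 2 : ℝ) *
        (∫⁻ ξ, G ξ ^ 2) ^ (1 / 2 : ℝ) * (∫⁻ ξ, H ξ ^ 2) ^ (1 / 2 : ℝ) := by
  set A := ∫⁻ ξ, F ξ ^ 2
  set B := ∫⁻ ξ, G ξ ^ 2
  set E := ∫⁻ ξ, H ξ ^ 2
  let μ : Measure (R3 × R3) := volume.prod volume
  have hsub : Measurable (fun z : R3 × R3 => z.1 - z.2) := by fun_prop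
  have mF : Measurable (fun z : R3 × R3 => F (z.1 - z.2)) := hF.comp hsub
  have mG : Measurable (fun z : R3 × R3 => G z.2) := hG.comp measurable_snd
  have mH : Measurable (fun z : R3 × R3 => H z.1) := hH.comp measurable_fst
  have mS1 : Measurable (fun z : R3 × R3 => S z.1 z.2) := hS
  have mS2 : Measurable (fun z : R3 × R3 => S z.2 z.1) := hS.comp measurable_swap
  have mS3 : Measurable (fun z : R3 × R3 => S (z.1 - z.2) z.1) :=
    hS.comp (hsub.prodMk measurable_fst)
  have mh : Measurable (fun x : ENNReal => x ^ (1 / 2 : ℝ)) := by fun_prop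
  have mFG : Measurable (fun z : R3 × R3 => F (z.1 - z.2) * G z.2) := mF.mul mG
  have mHF : Measurable (fun z : R3 × R3 => H z.1 * F (z.1 - z.2)) := mH.mul mF
  have mHG : Measurable (fun z : R3 × R3 => H z.1 * G z.2) := mH.mul mG
  have mHS : Measurable (fun z : R3 × R3 => H z.1 * S z.1 z.2 ^ (1 / 2 : ℝ)) :=
    mH.mul (mh.comp mS1)
  have mGS : Measurable (fun z : R3 × R3 => G z.2 * S z.2 z.1 ^ (1 / 2 : ℝ)) :=
    mG.mul (mh.comp mS2)
  have mFS : Measurable (fun z : R3 × R3 => F (z.1 - z.2) * S (z.1 - z.2) z.1 ^ (1 / 2 : ℝ)) :=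
    mF.mul (mh.comp mS3)
  have msq : ∀ {f : R3 × R3 → ENNReal}, Measurable f → Measurable (fun z => f z ^ 2) :=
    fun hf => hf.pow_const 2
  -- the three pairs of functions
  have iFG : ∫⁻ z, (F (z.1 - z.2) * G z.2) ^ 2 ∂μ = A * B := by
    rw [lintegral_prod_symm' _ (msq mFG)]
    simp_rw [mul_pow]
    have : ∀ q, ∫⁻ r, F (r - q) ^ 2 * G q ^ 2 = A * G q ^ 2 := fun q => by
      rw [lintegral_mul_const _ (by fun_prop)]
      rw [lintegral_sub_right_eq_self (fun p => F p ^ 2) q]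
    simp_rw [this]
    rw [lintegral_const_mul _ (by fun_prop)]
  have iHF : ∫⁻ z, (H z.1 * F (z.1 - z.2)) ^ 2 ∂μ = E * A := by
    rw [lintegral_prod _ (msq mHF).aemeasurable]
    simp_rw [mul_pow]
    have : ∀ r, ∫⁻ q, H r ^ 2 * F (r - q) ^ 2 = H r ^ 2 * A := fun r => by
      rw [lintegral_const_mul _ (by fun_prop)]
      rw [lintegral_sub_left_eq_self (fun p => F p ^ 2) r]
    simp_rw [this]
    rw [lintegral_mul_const _ (by fun_prop)]
  have iHG : ∫⁻ z, (H z.1 * G z.2) ^ 2 ∂μ = E * B := by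
    simp_rw [mul_pow]
    exact lintegral_prod_mul (f := fun r => H r ^ 2) (g := fun q => G q ^ 2)
      (hH.pow_const 2).aemeasurable (hG.pow_const 2).aemeasurable
  -- the kernel against the remaining function
  have iHS : ∫⁻ z, (H z.1 * S z.1 z.2 ^ (1 / 2 : ℝ)) ^ 2 ∂μ ≤ D * E := by
    rw [lintegral_prod _ (msq mHS).aemeasurable]
    simp_rw [mul_pow, sq_rpow_half]
    rw [← lintegral_const_mul _ (by fun_prop)]
    refine lintegral_mono fun r => ?_
    rw [lintegral_const_mul _ (by exact hS.comp measurable_prodMk_left), mul_comm]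
    gcongr
    exact hD r
  have iGS : ∫⁻ z, (G z.2 * S z.2 z.1 ^ (1 / 2 : ℝ)) ^ 2 ∂μ ≤ D * B := by
    rw [lintegral_prod_symm' _ (msq mGS)]
    simp_rw [mul_pow, sq_rpow_half]
    rw [← lintegral_const_mul _ (by fun_prop)]
    refine lintegral_mono fun q => ?_
    rw [lintegral_const_mul _ (by exact hS.comp measurable_prodMk_left), mul_comm]
    gcongr
    exact hD q
  have iFS : ∫⁻ z, (F (z.1 - z.2) * S (z.1 - z.2) z.1 ^ (1 / 2 : ℝ)) ^ 2 ∂μ ≤ D * A := by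
    rw [lintegral_prod _ (msq mFS).aemeasurable]
    simp_rw [mul_pow, sq_rpow_half]
    have e : ∀ r, ∫⁻ q, F (r - q) ^ 2 * S (r - q) r = ∫⁻ p, F p ^ 2 * S p r := fun r =>
      lintegral_sub_left_eq_self (fun p => F p ^ 2 * S p r) r
    simp_rw [e]
    rw [lintegral_lintegral_swap (by
      exact (((hF.comp measurable_snd).pow_const 2).mul (hS.comp measurable_swap)).aemeasurable)]
    rw [← lintegral_const_mul _ (by fun_prop)]
    refine lintegral_mono fun p => ?_
    rw [lintegral_const_mul _ (by exact hS.comp measurable_prodMk_left), mul_comm]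
    gcongr
    exact hD p
  have hhalf : ∀ x y : ENNReal, (x * y) ^ (1 / 2 : ℝ) = x ^ (1 / 2 : ℝ) * y ^ (1 / 2 : ℝ) :=
    fun x y => ENNReal.mul_rpow_of_nonneg _ _ (by norm_num)
  have m1 : Measurable (fun z : R3 × R3 =>
      (F (z.1 - z.2) * G z.2) * (H z.1 * S z.1 z.2 ^ (1 / 2 : ℝ))) := mFG.mul mHS
  have m2 : Measurable (fun z : R3 × R3 =>
      (H z.1 * F (z.1 - z.2)) * (G z.2 * S z.2 z.1 ^ (1 / 2 : ℝ))) := mHF.mul mGS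
  have m3 : Measurable (fun z : R3 × R3 =>
      (H z.1 * G z.2) * (F (z.1 - z.2) * S (z.1 - z.2) z.1 ^ (1 / 2 : ℝ))) := mHG.mul mFS
  have m12 : Measurable (fun z : R3 × R3 =>
      (F (z.1 - z.2) * G z.2) * (H z.1 * S z.1 z.2 ^ (1 / 2 : ℝ))
      + (H z.1 * F (z.1 - z.2)) * (G z.2 * S z.2 z.1 ^ (1 / 2 : ℝ))) := m1.add m2
  have m123 : Measurable (fun z : R3 × R3 =>
      (F (z.1 - z.2) * G z.2) * (H z.1 * S z.1 z.2 ^ (1 / 2 : ℝ))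
      + (H z.1 * F (z.1 - z.2)) * (G z.2 * S z.2 z.1 ^ (1 / 2 : ℝ))
      + (H z.1 * G z.2) * (F (z.1 - z.2) * S (z.1 - z.2) z.1 ^ (1 / 2 : ℝ))) := m12.add m3
  have P1 : ∫⁻ z, (F (z.1 - z.2) * G z.2) * (H z.1 * S z.1 z.2 ^ (1 / 2 : ℝ)) ∂μ ≤
      (A * B) ^ (1 / 2 : ℝ) * (D * E) ^ (1 / 2 : ℝ) :=
    (lintegral_mul_le_sq μ mFG mHS).trans
      (mul_le_mul' (by rw [← iFG]) (ENNReal.rpow_le_rpow iHS (by norm_num)))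
  have P2 : ∫⁻ z, (H z.1 * F (z.1 - z.2)) * (G z.2 * S z.2 z.1 ^ (1 / 2 : ℝ)) ∂μ ≤
      (E * A) ^ (1 / 2 : ℝ) * (D * B) ^ (1 / 2 : ℝ) :=
    (lintegral_mul_le_sq μ mHF mGS).trans
      (mul_le_mul' (by rw [← iHF]) (ENNReal.rpow_le_rpow iGS (by norm_num)))
  have P3 : ∫⁻ z, (H z.1 * G z.2) * (F (z.1 - z.2) * S (z.1 - z.2) z.1 ^ (1 / 2 : ℝ)) ∂μ ≤
      (E * B) ^ (1 / 2 : ℝ) * (D * A) ^ (1 / 2 : ℝ) :=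
    (lintegral_mul_le_sq μ mHG mFS).trans
      (mul_le_mul' (by rw [← iHG]) (ENNReal.rpow_le_rpow iFS (by norm_num)))
  have hpt : ∀ r q, H r * F (r - q) * G q * K r q ^ (1 / 2 : ℝ) ≤
      C ^ (1 / 2 : ℝ) * ((F (r - q) * G q) * (H r * S r q ^ (1 / 2 : ℝ))
        + (H r * F (r - q)) * (G q * S q r ^ (1 / 2 : ℝ))
        + (H r * G q) * (F (r - q) * S (r - q) r ^ (1 / 2 : ℝ))) := by
    intro r q
    have h1 : K r q ^ (1 / 2 : ℝ) ≤ C ^ (1 / 2 : ℝ) *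
        (S r q ^ (1 / 2 : ℝ) + S q r ^ (1 / 2 : ℝ) + S (r - q) r ^ (1 / 2 : ℝ)) := by
      refine (ENNReal.rpow_le_rpow (hK r q) (by norm_num)).trans ?_
      rw [hhalf]
      gcongr
      refine (ENNReal.rpow_add_le_add_rpow _ _ (by norm_num) (by norm_num)).trans ?_
      gcongr
      exact ENNReal.rpow_add_le_add_rpow _ _ (by norm_num) (by norm_num)
    calc _ ≤ H r * F (r - q) * G q * (C ^ (1 / 2 : ℝ) *
        (S r q ^ (1 / 2 : ℝ) + S q r ^ (1 / 2 : ℝ) + S (r - q) r ^ (1 / 2 : ℝ))) := by gcongr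
      _ = _ := by ring
  calc ∫⁻ r, ∫⁻ q, H r * F (r - q) * G q * K r q ^ (1 / 2 : ℝ)
      ≤ ∫⁻ r, ∫⁻ q, C ^ (1 / 2 : ℝ) * ((F (r - q) * G q) * (H r * S r q ^ (1 / 2 : ℝ))
        + (H r * F (r - q)) * (G q * S q r ^ (1 / 2 : ℝ))
        + (H r * G q) * (F (r - q) * S (r - q) r ^ (1 / 2 : ℝ))) :=
        lintegral_mono fun r => lintegral_mono fun q => hpt r q
    _ = ∫⁻ z, C ^ (1 / 2 : ℝ) * ((F (z.1 - z.2) * G z.2) * (H z.1 * S z.1 z.2 ^ (1 / 2 : ℝ))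
        + (H z.1 * F (z.1 - z.2)) * (G z.2 * S z.2 z.1 ^ (1 / 2 : ℝ))
        + (H z.1 * G z.2) * (F (z.1 - z.2) * S (z.1 - z.2) z.1 ^ (1 / 2 : ℝ))) ∂μ := by
        exact (lintegral_prod _ (m123.const_mul _).aemeasurable).symm
    _ = C ^ (1 / 2 : ℝ) *
        (∫⁻ z, (F (z.1 - z.2) * G z.2) * (H z.1 * S z.1 z.2 ^ (1 / 2 : ℝ)) ∂μ
        + ∫⁻ z, (H z.1 * F (z.1 - z.2)) * (G z.2 * S z.2 z.1 ^ (1 / 2 : ℝ)) ∂μ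
        + ∫⁻ z, (H z.1 * G z.2) * (F (z.1 - z.2) * S (z.1 - z.2) z.1 ^ (1 / 2 : ℝ)) ∂μ) := by
        rw [lintegral_const_mul _ m123, lintegral_add_left m12,
          lintegral_add_left m1]
    _ ≤ C ^ (1 / 2 : ℝ) * ((A * B) ^ (1 / 2 : ℝ) * (D * E) ^ (1 / 2 : ℝ)
        + (E * A) ^ (1 / 2 : ℝ) * (D * B) ^ (1 / 2 : ℝ)
        + (E * B) ^ (1 / 2 : ℝ) * (D * A) ^ (1 / 2 : ℝ)) := by gcongr
    _ = _ := by simp only [hhalf]; ring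

/-! ### Fourier side of the norms, and the product law -/

open FourierTransform in
/-- The Fourier transform of a real Schwartz function, as a complex Schwartz function. -/
def hatS (a : SchwartzMap R3 ℝ) : SchwartzMap R3 ℂ := 𝓕 (a.postcompCLM Complex.ofRealCLM)

open FourierTransform in
lemma FT3_eq (a : SchwartzMap R3 ℝ) : FT3 (fun x => (a x : ℂ)) = ⇑(hatS a) := by
  funext ξ
  rw [hatS, SchwartzMap.fourier_coe, Real.fourier_eq']
  unfold FT3
  refine integral_congr_ae (Filter.Eventually.of_forall fun x => ?_)
  simp [mul_assoc]

open FourierTransform in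
lemma FT3_mul (a b : SchwartzMap R3 ℝ) (ξ : R3) :
    FT3 (fun x => ((a x * b x : ℝ) : ℂ)) ξ = ∫ q, hatS b q * hatS a (ξ - q) := by
  have h := SchwartzMap.convolution_apply (ContinuousLinearMap.mul ℂ ℂ) (hatS b) (hatS a) ξ
  rw [convolution_def] at h
  simp only [ContinuousLinearMap.mul_apply'] at h
  rw [← h]
  have hrefl : ∀ (c : SchwartzMap R3 ℝ) (x : R3), 𝓕 (hatS c) x = (c (-x) : ℂ) := by
    intro c x
    have h1 : 𝓕⁻ (hatS c) (-x) = 𝓕 (hatS c) x := by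
      rw [SchwartzMap.fourierInv_coe, SchwartzMap.fourier_coe, Real.fourierInv_eq',
        Real.fourier_eq']
      simp
    rw [← h1, hatS]
    simp
  have h2 : SchwartzMap.convolution (ContinuousLinearMap.mul ℂ ℂ) (hatS b) (hatS a) =
      𝓕⁻ (SchwartzMap.pairing (ContinuousLinearMap.mul ℂ ℂ) (𝓕 (hatS b)) (𝓕 (hatS a))) := rfl
  rw [h2, SchwartzMap.fourierInv_coe, Real.fourierInv_eq']
  unfold FT3
  rw [← integral_neg_eq_self]
  refine integral_congr_ae (Filter.Eventually.of_forall fun x => ?_)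
  simp [hrefl, mul_comm]

lemma enorm_FT3_mul_le (a b : SchwartzMap R3 ℝ) (r : R3) :
    ‖FT3 (fun x => ((a x * b x : ℝ) : ℂ)) r‖ₑ ≤ ∫⁻ q, ‖hatS a (r - q)‖ₑ * ‖hatS b q‖ₑ := by
  rw [FT3_mul]
  refine (enorm_integral_le_lintegral_enorm _).trans (lintegral_mono fun q => ?_)
  rw [enorm_mul, mul_comm]

lemma continuous_wgt (t s : ℝ) : Continuous (wgt t s) := by
  unfold wgt
  refine Continuous.mul (Continuous.rpow_const (by fun_prop) fun ξ => Or.inl ?_)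
    (Continuous.rpow_const (by fun_prop) fun ξ => Or.inl ?_) <;> positivity

lemma measurable_FT3_mul (a b : SchwartzMap R3 ℝ) :
    Measurable (FT3 (fun x => ((a x * b x : ℝ) : ℂ))) := by
  have := FT3_eq (SchwartzMap.pairing (ContinuousLinearMap.mul ℝ ℝ) a b)
  simp only [SchwartzMap.pairing_apply_apply, ContinuousLinearMap.mul_apply'] at this
  rw [this]
  exact (hatS _).continuous.measurable

/-- With its Bochner integral, `hnormSq` takes the value `0` on functions of infinite norm, and so
does `toReal`. -/
lemma hnormSq_eq (t s : ℝ) (f : R3 → ℝ) (hf : Measurable (FT3 (fun x => (f x : ℂ)))) :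
    hnormSq t s f =
      (∫⁻ ξ, (ENNReal.ofReal (√(wgt t s ξ)) * ‖FT3 (fun x => (f x : ℂ)) ξ‖ₑ) ^ 2).toReal := by
  unfold hnormSq
  rw [integral_eq_lintegral_of_nonneg_ae
    (Filter.Eventually.of_forall fun ξ => mul_nonneg (wgt_pos t s ξ).le (sq_nonneg _))]
  · congr 1
    refine lintegral_congr fun ξ => ?_
    rw [mul_pow, ← ENNReal.ofReal_pow (Real.sqrt_nonneg _), Real.sq_sqrt (wgt_pos t s ξ).le,
      ENNReal.ofReal_mul (wgt_pos t s ξ).le, ENNReal.ofReal_pow (norm_nonneg _),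
      ofReal_norm]
  · exact ((continuous_wgt t s).measurable.mul (hf.norm.pow_const 2)).aestronglyMeasurable

/-- Schwartz functions have finite norm: the weight grows at most polynomially. -/
lemma lintegral_hatS_lt_top (t s : ℝ) (a : SchwartzMap R3 ℝ) :
    ∫⁻ ξ, (ENNReal.ofReal (√(wgt t s ξ)) * ‖hatS a ξ‖ₑ) ^ 2 < ⊤ := by
  obtain ⟨N, hN⟩ := exists_nat_ge (|t| + |s|)
  set B := SchwartzMap.seminorm ℝ 0 0 (hatS a)
  have hInt : Integrable (fun ξ : R3 =>
      2 ^ N * B * (‖ξ‖ ^ 0 * ‖hatS a ξ‖ + ‖ξ‖ ^ (2 * N) * ‖hatS a ξ‖)) :=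
    (((hatS a).integrable_pow_mul volume 0).add
      ((hatS a).integrable_pow_mul volume (2 * N))).const_mul _
  refine lt_of_le_of_lt (lintegral_mono fun ξ => ?_) hInt.lintegral_lt_top
  rw [← ofReal_norm, ← ENNReal.ofReal_mul (Real.sqrt_nonneg _),
    ← ENNReal.ofReal_pow (by positivity)]
  refine ENNReal.ofReal_le_ofReal ?_
  rw [mul_pow, Real.sq_sqrt (wgt_pos t s ξ).le]
  have hB : ‖hatS a ξ‖ ≤ B := SchwartzMap.norm_le_seminorm ℝ (hatS a) ξ
  have hB0 : 0 ≤ B := (norm_nonneg _).trans hB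
  have hn : ‖ξ‖ ^ 2 = ξ 0 ^ 2 + ξ 1 ^ 2 + ξ 2 ^ 2 := by
    rw [EuclideanSpace.norm_sq_eq, Fin.sum_univ_three]; simp
  have hb : ∀ x u : ℝ, 1 ≤ x → x ≤ 1 + ‖ξ‖ ^ 2 → x ^ u ≤ (1 + ‖ξ‖ ^ 2) ^ |u| := fun x u h1 h2 =>
    (Real.rpow_le_rpow_of_exponent_le h1 (le_abs_self u)).trans
      (Real.rpow_le_rpow (by linarith) h2 (abs_nonneg u))
  have hw : wgt t s ξ ≤ 2 ^ N * (1 + ‖ξ‖ ^ (2 * N)) := by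
    calc wgt t s ξ ≤ (1 + ‖ξ‖ ^ 2) ^ |t| * (1 + ‖ξ‖ ^ 2) ^ |s| := by
          unfold wgt
          refine mul_le_mul (hb _ _ ?_ ?_) (hb _ _ ?_ ?_) (by positivity) (by positivity) <;>
            nlinarith [sq_nonneg (ξ 0), sq_nonneg (ξ 1), sq_nonneg (ξ 2)]
      _ = (1 + ‖ξ‖ ^ 2) ^ (|t| + |s|) := (Real.rpow_add (by positivity) _ _).symm
      _ ≤ (1 + ‖ξ‖ ^ 2) ^ (N : ℝ) :=
          Real.rpow_le_rpow_of_exponent_le (by nlinarith [sq_nonneg ‖ξ‖]) hN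
      _ = (1 + ‖ξ‖ ^ 2) ^ N := Real.rpow_natCast _ _
      _ ≤ 2 ^ (N - 1) * (1 ^ N + (‖ξ‖ ^ 2) ^ N) := add_pow_le (by norm_num) (by positivity) N
      _ ≤ 2 ^ N * (1 ^ N + (‖ξ‖ ^ 2) ^ N) := by
          gcongr
          · norm_num
          · omega
      _ = _ := by rw [one_pow, pow_mul]
  calc wgt t s ξ * ‖hatS a ξ‖ ^ 2
      ≤ (2 ^ N * (1 + ‖ξ‖ ^ (2 * N))) * (B * ‖hatS a ξ‖) := by
        refine mul_le_mul hw ?_ (by positivity) (by positivity)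
        rw [sq]; gcongr
    _ = _ := by ring

/-- The weights are absorbed into the functions at the cost of the kernel `KK`. -/
lemma weight_split (σ σ' s s₀ : ℝ) (r q : R3) (f g : ENNReal) :
    ENNReal.ofReal (√(wgt (σ + σ' - 1) s r)) * (f * g) =
      (ENNReal.ofReal (√(wgt σ s (r - q))) * f) * (ENNReal.ofReal (√(wgt σ' s₀ q)) * g) *
        ENNReal.ofReal (KK σ σ' s s₀ r q) ^ (1 / 2 : ℝ) := by
  have h1 := wgt_pos σ s (r - q)
  have h2 := wgt_pos σ' s₀ q
  have h3 := wgt_pos (σ + σ' - 1) s r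
  have hK : 0 ≤ KK σ σ' s s₀ r q := by unfold KK; positivity
  have e : √(wgt (σ + σ' - 1) s r) =
      √(wgt σ s (r - q)) * √(wgt σ' s₀ q) * √(KK σ σ' s s₀ r q) := by
    rw [← Real.sqrt_mul h1.le, ← Real.sqrt_mul (by positivity)]
    congr 1
    unfold KK
    field_simp
  rw [ENNReal.ofReal_rpow_of_nonneg hK (by norm_num), ← Real.sqrt_eq_rpow, e,
    ENNReal.ofReal_mul (by positivity), ENNReal.ofReal_mul (by positivity)]
  ring

theorem anisotropic_product_rule (σ σ' s s₀ : ℝ) (hσ : σ < 1) (hσ' : σ' < 1)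
    (hσσ' : 0 < σ + σ') (hs₀ : 1 / 2 < s₀) (hss₀ : s ≤ s₀) (hsum : 0 ≤ s + s₀) :
    ∃ C : ℝ, 0 < C ∧ ∀ a b : SchwartzMap R3 ℝ,
      hnorm (σ + σ' - 1) s (fun x => a x * b x) ≤ C * hnorm σ s ⇑a * hnorm σ' s₀ ⇑b := by
  -- one exponent in `[0, 1)` dominating the three horizontal exponents
  set e : ℝ := max 0 (max σ (max σ' (1 - σ - σ'))) with he
  have he0 : 0 ≤ e := le_max_left _ _
  have he1 : e < 1 := by
    rw [he]; simp only [max_lt_iff]; refine ⟨by norm_num, hσ, hσ', by linarith⟩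
  have heσ : σ ≤ e := (le_max_left _ _).trans (le_max_right _ _)
  have heσ' : σ' ≤ e := (le_max_left _ _).trans ((le_max_right _ _).trans (le_max_right _ _))
  have heσσ' : 1 - σ - σ' ≤ e :=
    (le_max_right _ _).trans ((le_max_right _ _).trans (le_max_right _ _))
  set D : ENNReal :=
    4 * (ENNReal.ofReal (2 / (1 - e)) * ENNReal.ofReal (2 / (1 - e)) * ∫⁻ x, rho s₀ x) with hD
  have hDtop : D ≠ ⊤ := by
    rw [hD]
    exact ENNReal.mul_ne_top (by norm_num) (ENNReal.mul_ne_top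
      (ENNReal.mul_ne_top ENNReal.ofReal_ne_top ENNReal.ofReal_ne_top)
      (lintegral_rho_lt_top hs₀).ne)
  set C : ENNReal := ENNReal.ofReal (4 ^ (|σ| + |σ'| + |1 - σ - σ'|) * 4 ^ |s|)
  set M : ENNReal := 3 * (C ^ (1 / 2 : ℝ) * D ^ (1 / 2 : ℝ)) with hM
  have hMtop : M ≠ ⊤ := ENNReal.mul_ne_top (by norm_num) (ENNReal.mul_ne_top
    (ENNReal.rpow_ne_top_of_nonneg (by norm_num) ENNReal.ofReal_ne_top)
    (ENNReal.rpow_ne_top_of_nonneg (by norm_num) hDtop))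
  refine ⟨M.toReal + 1, by positivity, fun a b => ?_⟩
  set F : R3 → ENNReal := fun ξ => ENNReal.ofReal (√(wgt σ s ξ)) * ‖hatS a ξ‖ₑ with hF
  set G : R3 → ENNReal := fun ξ => ENNReal.ofReal (√(wgt σ' s₀ ξ)) * ‖hatS b ξ‖ₑ with hG
  set H : R3 → ENNReal := fun ξ => ENNReal.ofReal (√(wgt (σ + σ' - 1) s ξ)) *
    ‖FT3 (fun x => ((a x * b x : ℝ) : ℂ)) ξ‖ₑ with hH
  have mw : ∀ t u : ℝ, Measurable (fun ξ => ENNReal.ofReal (√(wgt t u ξ))) := fun t u =>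
    (continuous_wgt t u).measurable.sqrt.ennreal_ofReal
  have mF : Measurable F := (mw _ _).mul (hatS a).continuous.measurable.enorm
  have mG : Measurable G := (mw _ _).mul (hatS b).continuous.measurable.enorm
  have mH : Measurable H := (mw _ _).mul (measurable_FT3_mul a b).enorm
  have na : hnorm σ s a = ((∫⁻ ξ, F ξ ^ 2) ^ (1 / 2 : ℝ)).toReal := by
    rw [hnorm, hnormSq_eq _ _ _ (by rw [FT3_eq]; exact (hatS a).continuous.measurable), FT3_eq,
      Real.sqrt_eq_rpow, ENNReal.toReal_rpow]
  have nb : hnorm σ' s₀ b = ((∫⁻ ξ, G ξ ^ 2) ^ (1 / 2 : ℝ)).toReal := by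
    rw [hnorm, hnormSq_eq _ _ _ (by rw [FT3_eq]; exact (hatS b).continuous.measurable), FT3_eq,
      Real.sqrt_eq_rpow, ENNReal.toReal_rpow]
  have nab : hnorm (σ + σ' - 1) s (fun x => a x * b x) =
      ((∫⁻ ξ, H ξ ^ 2) ^ (1 / 2 : ℝ)).toReal := by
    rw [hnorm, hnormSq_eq _ _ _ (measurable_FT3_mul a b), Real.sqrt_eq_rpow, ENNReal.toReal_rpow]
  have fa : (∫⁻ ξ, F ξ ^ 2) ^ (1 / 2 : ℝ) ≠ ⊤ :=
    ENNReal.rpow_ne_top_of_nonneg (by norm_num) (lintegral_hatS_lt_top σ s a).ne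
  have fb : (∫⁻ ξ, G ξ ^ 2) ^ (1 / 2 : ℝ) ≠ ⊤ :=
    ENNReal.rpow_ne_top_of_nonneg (by norm_num) (lintegral_hatS_lt_top σ' s₀ b).ne
  rw [na, nb, nab]
  have tri := trilinear mF mG mH (measurable_QQ e s₀) (lintegral_QQ_le e s₀ he0 he1)
    (KK_le he0 heσ heσ' heσσ' hss₀ hsum)
  rw [← hD, ← hM] at tri
  have hle : ∫⁻ ξ, H ξ ^ 2 ≤ ∫⁻ r, ∫⁻ q, H r * F (r - q) * G q *
      ENNReal.ofReal (KK σ σ' s s₀ r q) ^ (1 / 2 : ℝ) := by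
    refine lintegral_mono fun r => ?_
    have hm : Measurable (fun q => ‖hatS a (r - q)‖ₑ * ‖hatS b q‖ₑ) :=
      ((hatS a).continuous.comp (continuous_sub_left r)).measurable.enorm.mul
        (hatS b).continuous.measurable.enorm
    calc H r ^ 2 = H r * ENNReal.ofReal (√(wgt (σ + σ' - 1) s r)) *
          ‖FT3 (fun x => ((a x * b x : ℝ) : ℂ)) r‖ₑ := by simp only [hH]; ring
      _ ≤ H r * ENNReal.ofReal (√(wgt (σ + σ' - 1) s r)) *
          ∫⁻ q, ‖hatS a (r - q)‖ₑ * ‖hatS b q‖ₑ := by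
          gcongr
          exact enorm_FT3_mul_le a b r
      _ = ∫⁻ q, H r * ENNReal.ofReal (√(wgt (σ + σ' - 1) s r)) *
          (‖hatS a (r - q)‖ₑ * ‖hatS b q‖ₑ) := (lintegral_const_mul _ hm).symm
      _ = _ := by
          refine lintegral_congr fun q => ?_
          rw [mul_assoc, weight_split σ σ' s s₀ r q]
          simp only [hF, hG]
          ring
  set X := ∫⁻ ξ, H ξ ^ 2
  set Y := (∫⁻ ξ, F ξ ^ 2) ^ (1 / 2 : ℝ)
  set Z := (∫⁻ ξ, G ξ ^ 2) ^ (1 / 2 : ℝ)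
  have hX : X ^ (1 / 2 : ℝ) * X ^ (1 / 2 : ℝ) ≤ M * Y * Z * X ^ (1 / 2 : ℝ) := by
    rw [← sq, sq_rpow_half]; exact hle.trans tri
  -- an infinite left-hand side has `toReal` equal to `0`; otherwise one factor cancels
  by_cases hXtop : X ^ (1 / 2 : ℝ) = ⊤
  · rw [hXtop, ENNReal.toReal_top]; positivity
  have hfin : X ^ (1 / 2 : ℝ) ≤ M * Y * Z := by
    by_cases hX0 : X ^ (1 / 2 : ℝ) = 0
    · rw [hX0]; exact zero_le
    · exact (ENNReal.mul_le_mul_iff_left hX0 hXtop).1 hX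
  have := ENNReal.toReal_mono (ENNReal.mul_ne_top (ENNReal.mul_ne_top hMtop fa) fb) hfin
  rw [ENNReal.toReal_mul, ENNReal.toReal_mul] at this
  refine this.trans ?_
  gcongr
  linarith
end
end

section
/- Let s, s₀ ∈ ℝ satisfy s₀ > 1/2, s ≤ s₀ and s + s₀ ≥ 0. Then there exists a constant C = C(s, s₀) such that for all Schwartz functions a, b on ℝ: ‖ab‖_{H^s(ℝ)} ≤ C ‖a‖_{H^s(ℝ)} ‖b‖_{H^{s₀}(ℝ)}; that is, the product map is continuous from H^s(ℝ) × H^{s₀}(ℝ) to H^s(ℝ). -/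
/-!
STATEMENT 4: Product rule `H^s(ℝ) × H^{s₀}(ℝ) → H^s(ℝ)` for `s₀ > 1/2`, `s ≤ s₀`,
`s + s₀ ≥ 0`, on Schwartz functions.
-/

/-!
Write `⟨x⟩² = 1 + x²`. Since `𝓕(ab) = 𝓕a ⋆ 𝓕b`, setting `f = ⟨·⟩^s |𝓕a|` and `g = ⟨·⟩^{s₀} |𝓕b|`
reduces the claim to the `L² × L² → L²` boundedness of the bilinear operator with kernel
`⟨x⟩^s ⟨t⟩^{-s} ⟨x-t⟩^{-s₀}`, applied to `f(t) g(x-t)`.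

The hypotheses `s ≤ s₀` and `0 ≤ s + s₀`, i.e. `|s| ≤ s₀`, give the pointwise bound
`⟨x⟩^s ⟨t⟩^{-s} ⟨x-t⟩^{-s₀} ≤ 2^{|s|} (⟨t⟩^{-s₀} + ⟨x-t⟩^{-s₀} + ⟨x⟩^{-s₀})` (`kernel_le`):
for `s ≥ 0` one distinguishes which of `⟨t⟩`, `⟨x-t⟩` is larger, and the case `s < 0` follows by
exchanging the roles of `x` and `t`.

Each of the three terms depends on one variable only, through the function `k = ⟨·⟩^{-s₀}`, which
is in `L²` because `s₀ > 1/2`. For each of them the Cauchy–Schwarz inequality in `t`, followed by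
integration in `x`, gives the bound `‖k‖₂ ‖f‖₂ ‖g‖₂` (`conv_bound_inner` for the first two,
`conv_bound_outer` for the third). These estimates are carried out with `ℝ≥0∞`-valued integrals;
the transfer to the real-valued norms uses that Schwartz functions have finite Sobolev norms.
-/

noncomputable section
open MeasureTheory Real Complex

/-- The Fourier transform of a function on `ℝ`. -/
def FT1 (f : ℝ → ℂ) (ξ : ℝ) : ℂ :=
  ∫ x : ℝ, Complex.exp ((-(2 * π * x * ξ) : ℝ) * Complex.I) * f x

/-- The squared `H^σ(ℝ)` Sobolev norm. -/
def hnormSq1 (σ : ℝ) (f : ℝ → ℂ) : ℝ :=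
  ∫ ξ : ℝ, (1 + ξ ^ 2) ^ σ * ‖FT1 f ξ‖ ^ 2

/-- The `H^σ(ℝ)` Sobolev norm. -/
def hnorm1 (σ : ℝ) (f : ℝ → ℂ) : ℝ := Real.sqrt (hnormSq1 σ f)


open scoped FourierTransform Convolution ENNReal

/-- The kernel bound for a nonnegative exponent, with `X`, `Y`, `Z` standing for `1 + x²`, `1 + t²`,
`1 + (x - t)²`. If `Z ≤ Y` then `X ≤ 4Y`, which gives the term `Z ^ (-q)`; if `Y ≤ Z` then
`X ^ r ≤ 4 ^ r * Z ^ (r - q) * Z ^ q` and `Z ^ (r - q) ≤ Y ^ (r - q)`. -/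
theorem weight_le {X Y Z r q : ℝ} (hX : 1 ≤ X) (hY : 1 ≤ Y) (hZ : 1 ≤ Z)
    (hXY : X ≤ 2 * (Y + Z)) (hr : 0 ≤ r) (hrq : r ≤ q) :
    X ^ r ≤ 4 ^ r * (Z ^ (-q) + Y ^ (-q)) * (Y ^ r * Z ^ q) := by
  have hX0 : 0 < X := by linarith
  have hY0 : 0 < Y := by linarith
  have hZ0 : 0 < Z := by linarith
  rcases le_total Z Y with h | h
  · calc X ^ r ≤ (4 * Y) ^ r := by gcongr; linarith
      _ = 4 ^ r * Z ^ (-q) * (Y ^ r * Z ^ q) := by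
        rw [Real.mul_rpow (by norm_num) hY0.le, Real.rpow_neg hZ0.le]
        field_simp
      _ ≤ _ := by
        gcongr
        have := Real.rpow_pos_of_pos hY0 (-q)
        linarith
  · calc X ^ r ≤ (4 * Z) ^ r := by gcongr; linarith
      _ = 4 ^ r * Z ^ r := by rw [Real.mul_rpow (by norm_num) hZ0.le]
      _ = 4 ^ r * (Z ^ (r - q) * Z ^ q) := by rw [← Real.rpow_add hZ0]; congr 2; ring
      _ ≤ 4 ^ r * (Y ^ (r - q) * Z ^ q) := by
        gcongr 4 ^ r * (?_ * Z ^ q)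
        exact Real.rpow_le_rpow_of_nonpos hY0 h (by linarith)
      _ = 4 ^ r * Y ^ (-q) * (Y ^ r * Z ^ q) := by
        rw [sub_eq_add_neg, Real.rpow_add hY0]; ring
      _ ≤ _ := by
        gcongr
        have := Real.rpow_pos_of_pos hZ0 (-q)
        linarith

/-- The kernel bound for all `|r| ≤ q`. For `r < 0`, multiplying by `X ^ (-r) * Y ^ (-r)` turns it
into `weight_le` for the exponent `-r` with `X` and `Y` exchanged. -/
theorem kernel_le {X Y Z r q : ℝ} (hX : 1 ≤ X) (hY : 1 ≤ Y) (hZ : 1 ≤ Z)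
    (hXY : X ≤ 2 * (Y + Z)) (hYX : Y ≤ 2 * (X + Z)) (hrq : r ≤ q) (hrq' : 0 ≤ r + q) :
    X ^ r ≤ 4 ^ |r| * (Y ^ (-q) + Z ^ (-q) + X ^ (-q)) * (Y ^ r * Z ^ q) := by
  have hX0 : 0 < X := by linarith
  have hY0 : 0 < Y := by linarith
  have hZ0 : 0 < Z := by linarith
  have hXq := Real.rpow_pos_of_pos hX0 (-q)
  have hYq := Real.rpow_pos_of_pos hY0 (-q)
  rcases le_total 0 r with h | h
  · rw [abs_of_nonneg h]
    refine (weight_le hX hY hZ hXY h hrq).trans ?_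
    gcongr 4 ^ r * ?_ * (Y ^ r * Z ^ q)
    linarith
  · rw [abs_of_nonpos h]
    have key := weight_le hY hX hZ hYX (neg_nonneg.2 h) (by linarith : -r ≤ q)
    have h1 : X ^ r = (X ^ r * Y ^ r) * Y ^ (-r) := by
      rw [mul_assoc, ← Real.rpow_add hY0]; simp
    have h2 : X ^ r * X ^ (-r) = 1 := by rw [← Real.rpow_add hX0]; simp
    calc X ^ r = (X ^ r * Y ^ r) * Y ^ (-r) := h1
      _ ≤ (X ^ r * Y ^ r) * (4 ^ (-r) * (Z ^ (-q) + X ^ (-q)) * (X ^ (-r) * Z ^ q)) := by gcongr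
      _ = (X ^ r * X ^ (-r)) * (4 ^ (-r) * (Z ^ (-q) + X ^ (-q)) * (Y ^ r * Z ^ q)) := by ring
      _ ≤ _ := by
        rw [h2, one_mul]
        gcongr
        linarith

/-- The Cauchy–Schwarz inequality, in squared form. -/
theorem lintegral_mul_sq_le {u v : ℝ → ℝ≥0∞} (hu : Measurable u) (hv : Measurable v) :
    (∫⁻ t, u t * v t) ^ 2 ≤ (∫⁻ t, u t ^ 2) * ∫⁻ t, v t ^ 2 := by
  have h := ENNReal.lintegral_mul_le_Lp_mul_Lq volume Real.HolderConjugate.two_two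
    hu.aemeasurable hv.aemeasurable
  simp only [Pi.mul_apply, ENNReal.rpow_two] at h
  calc _ ≤ _ := pow_le_pow_left' h 2
    _ = _ := by
      rw [mul_pow, ← ENNReal.rpow_mul_natCast, ← ENNReal.rpow_mul_natCast]
      norm_num

theorem lintegral_conv {u v : ℝ → ℝ≥0∞} (hu : Measurable u) (hv : Measurable v) :
    ∫⁻ x, ∫⁻ t, u t * v (x - t) = (∫⁻ t, u t) * ∫⁻ t, v t := by
  rw [lintegral_lintegral_swap (by fun_prop)]
  have (t : ℝ) : ∫⁻ x, u t * v (x - t) = u t * ∫⁻ x, v x := by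
    rw [lintegral_const_mul _ (by fun_prop), lintegral_sub_right_eq_self]
  simp_rw [this]
  rw [lintegral_mul_const _ hu]

/-- Cauchy–Schwarz in `t` against `K x` leaves `∫ f(t)² g(x-t)² dt`, whose integral in `x` is
`‖f‖₂² ‖g‖₂²`. -/
theorem conv_bound_inner {K : ℝ → ℝ → ℝ≥0∞} {M : ℝ≥0∞} {f g : ℝ → ℝ≥0∞}
    (hK : ∀ x, Measurable (K x)) (hKM : ∀ x, ∫⁻ t, K x t ^ 2 = M)
    (hf : Measurable f) (hg : Measurable g) :
    ∫⁻ x, (∫⁻ t, K x t * (f t * g (x - t))) ^ 2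
      ≤ M * ((∫⁻ t, f t ^ 2) * ∫⁻ t, g t ^ 2) := by
  calc _ ≤ ∫⁻ x, M * ∫⁻ t, f t ^ 2 * g (x - t) ^ 2 := by
        refine lintegral_mono fun x => ?_
        refine (lintegral_mul_sq_le (hK x) (by fun_prop)).trans_eq ?_
        simp_rw [hKM, mul_pow]
    _ = _ := by
      rw [lintegral_const_mul _ (by fun_prop),
        lintegral_conv (u := fun t => f t ^ 2) (v := fun t => g t ^ 2) (by fun_prop) (by fun_prop)]

/-- When the kernel depends on `x` only, `f ⋆ g` is bounded by `‖f‖₂ ‖g‖₂` and `k` supplies the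
integrability in `x`. -/
theorem conv_bound_outer {k f g : ℝ → ℝ≥0∞} (hk : Measurable k)
    (hf : Measurable f) (hg : Measurable g) :
    ∫⁻ x, (∫⁻ t, k x * (f t * g (x - t))) ^ 2
      ≤ (∫⁻ t, k t ^ 2) * ((∫⁻ t, f t ^ 2) * ∫⁻ t, g t ^ 2) := by
  rw [← lintegral_mul_const _ (by fun_prop)]
  refine lintegral_mono fun x => ?_
  rw [lintegral_const_mul _ (by fun_prop), mul_pow]
  gcongr
  refine (lintegral_mul_sq_le hf (by fun_prop)).trans_eq ?_
  rw [lintegral_sub_left_eq_self (fun t => g t ^ 2)]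

theorem add_add_sq_le (a b c : ℝ≥0∞) : (a + b + c) ^ 2 ≤ 9 * (a ^ 2 + b ^ 2 + c ^ 2) := by
  have h : a + b + c ≤ 3 * max (max a b) c := by
    calc _ ≤ max (max a b) c + max (max a b) c + max (max a b) c := by gcongr <;> simp
      _ = _ := by ring
  calc _ ≤ (3 * max (max a b) c) ^ 2 := by gcongr
    _ = 9 * (max (max a b) c) ^ 2 := by ring
    _ ≤ _ := by
      gcongr
      rcases max_choice (max a b) c with h | h <;> rw [h]
      · rcases max_choice a b with h | h <;> rw [h]
        · rw [add_assoc]; exact le_self_add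
        · exact le_add_right le_add_self
      · exact le_add_self

theorem conv_bound {k f g : ℝ → ℝ≥0∞} (hk : Measurable k)
    (hf : Measurable f) (hg : Measurable g) :
    ∫⁻ x, (∫⁻ t, (k t + k (x - t) + k x) * (f t * g (x - t))) ^ 2
      ≤ 27 * (∫⁻ t, k t ^ 2) * ((∫⁻ t, f t ^ 2) * ∫⁻ t, g t ^ 2) := by
  calc _ ≤ ∫⁻ x, 9 * ((∫⁻ t, k t * (f t * g (x - t))) ^ 2
          + (∫⁻ t, k (x - t) * (f t * g (x - t))) ^ 2
          + (∫⁻ t, k x * (f t * g (x - t))) ^ 2) := by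
        refine lintegral_mono fun x => ?_
        refine le_trans (le_of_eq ?_) (add_add_sq_le _ _ _)
        rw [← lintegral_add_left (by fun_prop), ← lintegral_add_left (by fun_prop)]
        simp_rw [add_mul]
    _ ≤ 9 * ((∫⁻ t, k t ^ 2) * ((∫⁻ t, f t ^ 2) * ∫⁻ t, g t ^ 2)
          + (∫⁻ t, k t ^ 2) * ((∫⁻ t, f t ^ 2) * ∫⁻ t, g t ^ 2)
          + (∫⁻ t, k t ^ 2) * ((∫⁻ t, f t ^ 2) * ∫⁻ t, g t ^ 2)) := by
        rw [lintegral_const_mul _ (by fun_prop), lintegral_add_left (by fun_prop),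
          lintegral_add_left (by fun_prop)]
        gcongr
        · exact conv_bound_inner (K := fun _ t => k t) (fun _ => hk) (fun _ => rfl) hf hg
        · exact conv_bound_inner (K := fun x t => k (x - t)) (fun _ => by fun_prop)
            (fun x => lintegral_sub_left_eq_self (fun t => k t ^ 2) x) hf hg
        · exact conv_bound_outer hk hf hg
    _ = _ := by ring

/-- The weight `(1 + x²)^r`, with values in `ℝ≥0∞`. In terms of `⟨x⟩ = (1 + x²)^{1/2}`
it is `⟨x⟩^{2r}`. -/
def wt (r x : ℝ) : ℝ≥0∞ := ENNReal.ofReal ((1 + x ^ 2) ^ r)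

theorem measurable_wt (r : ℝ) : Measurable (wt r) := by
  unfold wt; fun_prop

theorem wt_le {r q : ℝ} (hrq : r ≤ q) (hrq' : 0 ≤ r + q) (x t : ℝ) :
    wt r x ≤ ENNReal.ofReal (4 ^ |r|) * (wt (-q) t + wt (-q) (x - t) + wt (-q) x)
      * (wt r t * wt q (x - t)) := by
  unfold wt
  rw [← ENNReal.ofReal_add (by positivity) (by positivity),
    ← ENNReal.ofReal_add (by positivity) (by positivity), ← ENNReal.ofReal_mul (by positivity),
    ← ENNReal.ofReal_mul (by positivity), ← ENNReal.ofReal_mul (by positivity)]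
  apply ENNReal.ofReal_le_ofReal
  refine kernel_le ?_ ?_ ?_ ?_ ?_ hrq hrq'
  · nlinarith
  · nlinarith
  · nlinarith
  · nlinarith [sq_nonneg (x - 2 * t)]
  · nlinarith [sq_nonneg (2 * x - t)]

theorem lintegral_wt_lt_top {q : ℝ} (hq : 1 / 4 < q) : ∫⁻ x, wt (-q) x ^ 2 < ∞ := by
  have h := (integrable_rpow_neg_one_add_norm_sq (E := ℝ) (μ := volume) (r := 4 * q)
    (by simp; linarith)).lintegral_lt_top
  refine lt_of_le_of_lt (le_of_eq (lintegral_congr fun x => ?_)) h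
  rw [wt, ← ENNReal.ofReal_pow (by positivity), ← Real.rpow_mul_natCast (by positivity)]
  simp only [Real.norm_eq_abs, sq_abs]
  congr 2; push_cast; ring

/-- `FT1` uses the same normalisation `exp(-2πixξ)` as Mathlib's Fourier transform. -/
theorem FT1_eq (f : ℝ → ℂ) : FT1 f = 𝓕 f := by
  ext x
  rw [Real.fourier_real_eq_integral_exp_smul, FT1]
  simp [neg_mul]

/-- The Fourier transform takes products to convolutions. The convolution of the Schwartz
functions `𝓕⁻ a` and `𝓕⁻ b` is `𝓕⁻ (a * b)`; evaluating this at `-x` gives the formula. -/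
theorem fourier_mul (a b : SchwartzMap ℝ ℂ) (x : ℝ) :
    𝓕 (fun y => a y * b y) x = ∫ t, 𝓕 (a : ℝ → ℂ) t * 𝓕 (b : ℝ → ℂ) (x - t) := by
  have h := SchwartzMap.convolution_apply (ContinuousLinearMap.mul ℂ ℂ) (𝓕⁻ a) (𝓕⁻ b) (-x)
  have h2 : SchwartzMap.convolution (ContinuousLinearMap.mul ℂ ℂ) (𝓕⁻ a) (𝓕⁻ b)
      = 𝓕⁻ (SchwartzMap.pairing (ContinuousLinearMap.mul ℂ ℂ) a b) := by
    simp [SchwartzMap.convolution]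
  rw [h2, SchwartzMap.fourierInv_coe, Real.fourierInv_eq_fourier_neg, neg_neg] at h
  refine h.trans ?_
  rw [convolution_def, ← integral_neg_eq_self]
  refine integral_congr_ae (.of_forall fun t => ?_)
  simp only [ContinuousLinearMap.mul_apply', SchwartzMap.fourierInv_coe,
    Real.fourierInv_eq_fourier_neg]
  rw [neg_neg, show -(-x - -t) = x - t by ring]

/-- The squared `H^σ` norm as an `ℝ≥0∞`-valued integral; it equals `∞`, rather than `0`, when
the integral diverges. -/
def energy (σ : ℝ) (f : ℝ → ℂ) : ℝ≥0∞ := ∫⁻ ξ, (wt (σ / 2) ξ * ‖𝓕 f ξ‖ₑ) ^ 2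

/-- This also holds when the energy is infinite: both sides are then `0`. -/
theorem hnormSq1_eq {σ : ℝ} {f : ℝ → ℂ} (hf : Continuous (𝓕 f)) :
    hnormSq1 σ f = (energy σ f).toReal := by
  have hm : Measurable fun ξ : ℝ => (1 + ξ ^ 2) ^ σ * ‖𝓕 f ξ‖ ^ 2 :=
    (by fun_prop : Measurable fun ξ : ℝ => (1 + ξ ^ 2) ^ σ).mul (hf.measurable.norm.pow_const 2)
  rw [hnormSq1, FT1_eq, integral_eq_lintegral_of_nonneg_ae (.of_forall fun x => by positivity)
    hm.aestronglyMeasurable, energy]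
  congr 1
  refine lintegral_congr fun x => ?_
  rw [wt, mul_pow, ← ENNReal.ofReal_pow (by positivity), ← Real.rpow_mul_natCast (by positivity),
    ← ofReal_norm, ← ENNReal.ofReal_pow (by positivity),
    ← ENNReal.ofReal_mul (by positivity)]
  simp

/-- `(1 + ξ²)^(σ/2) 𝓕f(ξ)` is again a Schwartz function, since the weight has temperate growth;
in particular it is square integrable. -/
theorem energy_lt_top (σ : ℝ) (f : SchwartzMap ℝ ℂ) : energy σ f < ∞ := by
  have hg := Function.hasTemperateGrowth_one_add_norm_sq_rpow ℝ (σ / 2)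
  have h := ((SchwartzMap.smulLeftCLM ℂ (fun x : ℝ => (1 + ‖x‖ ^ 2) ^ (σ / 2)) (𝓕 f)).memLp 2
    volume).eLpNorm_lt_top
  rw [eLpNorm_lt_top_iff_lintegral_rpow_enorm_lt_top (by norm_num) (by norm_num)] at h
  refine lt_of_le_of_lt (le_of_eq (lintegral_congr fun x => ?_)) h
  rw [SchwartzMap.smulLeftCLM_apply_apply hg, enorm_smul, SchwartzMap.fourier_coe,
    Real.enorm_eq_ofReal (by positivity)]
  simp [wt]

theorem energy_mul_le {s s₀ : ℝ} (hss₀ : s ≤ s₀) (hsum : 0 ≤ s + s₀) (a b : SchwartzMap ℝ ℂ) :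
    energy s (fun x => a x * b x) ≤
      ENNReal.ofReal (4 ^ |s / 2|) ^ 2 * (27 * ∫⁻ x, wt (-(s₀ / 2)) x ^ 2)
        * (energy s a * energy s₀ b) := by
  have ha : Continuous (𝓕 (a : ℝ → ℂ)) := (𝓕 a).continuous
  have hb : Continuous (𝓕 (b : ℝ → ℂ)) := (𝓕 b).continuous
  have hw := measurable_wt
  set c := ENNReal.ofReal (4 ^ |s / 2|) with hc
  have hc' : c ≠ ∞ := ENNReal.ofReal_ne_top
  set k := wt (-(s₀ / 2)) with hk
  set f : ℝ → ℝ≥0∞ := fun t => wt (s / 2) t * ‖𝓕 (a : ℝ → ℂ) t‖ₑ with hf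
  set g : ℝ → ℝ≥0∞ := fun t => wt (s₀ / 2) t * ‖𝓕 (b : ℝ → ℂ) t‖ₑ with hg
  have hkm : Measurable k := hw _
  have hfm : Measurable f := by fun_prop
  have hgm : Measurable g := by fun_prop
  calc energy s (fun x => a x * b x)
      ≤ ∫⁻ x, c ^ 2 * (∫⁻ t, (k t + k (x - t) + k x) * (f t * g (x - t))) ^ 2 := by
        refine lintegral_mono fun x => ?_
        rw [← mul_pow, ← lintegral_const_mul' _ _ hc']
        gcongr
        rw [fourier_mul]
        refine (mul_le_mul_right (enorm_integral_le_lintegral_enorm _) _).trans ?_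
        rw [← lintegral_const_mul _ (by fun_prop)]
        refine lintegral_mono fun t => ?_
        rw [enorm_mul]
        refine (mul_le_mul_left (wt_le (r := s / 2) (q := s₀ / 2) (by linarith) (by linarith)
          x t) _).trans_eq ?_
        simp only [hf, hg, ← hk, ← hc]
        ring
    _ ≤ _ := by
        rw [lintegral_const_mul' _ _ (by finiteness), mul_assoc (c ^ 2)]
        gcongr
        exact conv_bound hkm hfm hgm

theorem product_rule_one_dim (s s₀ : ℝ) (hs₀ : 1 / 2 < s₀) (hss₀ : s ≤ s₀)
    (hsum : 0 ≤ s + s₀) :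
    ∃ C : ℝ, 0 < C ∧ ∀ a b : SchwartzMap ℝ ℂ,
      hnorm1 s (fun x => a x * b x) ≤ C * hnorm1 s ⇑a * hnorm1 s₀ ⇑b := by
  set D := ENNReal.ofReal (4 ^ |s / 2|) ^ 2 * (27 * ∫⁻ x, wt (-(s₀ / 2)) x ^ 2) with hD
  have hD' : D ≠ ∞ := by
    have := (lintegral_wt_lt_top (q := s₀ / 2) (by linarith)).ne
    finiteness
  clear_value D
  -- Adding `1` makes the constant positive without computing `D`.
  refine ⟨√D.toReal + 1, by positivity, fun a b => ?_⟩
  have hab : Continuous (𝓕 (fun x => a x * b x)) :=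
    (𝓕 (SchwartzMap.pairing (ContinuousLinearMap.mul ℂ ℂ) a b)).continuous
  rw [hnorm1, hnorm1, hnorm1, hnormSq1_eq hab, hnormSq1_eq (𝓕 a).continuous,
    hnormSq1_eq (𝓕 b).continuous]
  have ha := (energy_lt_top s a).ne
  have hb := (energy_lt_top s₀ b).ne
  have h := ENNReal.toReal_mono (b := D * (energy s a * energy s₀ b)) (by finiteness)
    (hD ▸ energy_mul_le hss₀ hsum a b)
  rw [ENNReal.toReal_mul, ENNReal.toReal_mul] at h
  calc _ ≤ _ := Real.sqrt_le_sqrt h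
    _ = √D.toReal * √(energy s a).toReal * √(energy s₀ b).toReal := by
      rw [Real.sqrt_mul (by positivity), Real.sqrt_mul (by positivity), mul_assoc]
    _ ≤ _ := by gcongr; linarith
end
end
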